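/- arXiv:1107.3672 — 2 statements merged into one kernel-verified Lean document; each statement's English description precedes it below -/
import Mathlib

section
/- Let r, s be integers with r−1 ≤ s ≤ 2r−4 and let Σ ⊂ P^{r−1} be a nondegenerate integral projective curve of degree s with arithmetic genus π (necessarily π ≤ π₀ := s−r+1 by Castelnuovo's bound). Then: (i) h¹(Σ, O_Σ(i)) = 0 for all i ≥ 1; (ii) h¹(P^{r−1}, I_Σ(1)) = π₀−π; (iii) h¹(P^{r−1}, I_Σ(i)) ≤ max(0, h¹(P^{r−1}, I_Σ(i−1)) − 1) for all i ≥ 2; and consequently (iv) h¹(P^{r−1}, I_Σ(i)) ≤ max(0, π₀−π+1−i) for all i ≥ 1. -/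
/-!
The proof replaces sheaf cohomology by multiplication of functions. Let `F` be the fraction field of
`R / I` and let `W ⊆ F` be the space of linear forms divided by a fixed coordinate that does not
vanish on the curve. Then `Wⁱ` is isomorphic to `(R / I)_i`, and the space of sections of `O_Σ(i)`
is isomorphic to the saturation `satB W i = ⋃ⱼ (W ^ (j + i) : W ^ j)` (`h0Nat_eq`). So everything is a
statement about the dimensions of `Wⁱ` and `satB W i`.

As in Castelnuovo's argument, these are compared in consecutive degrees by a hyperplane section. The
hyperplane used is the generic member `ℓ = f₁ - u f₂ - g` of a pencil, with coefficients in
`K = k(u, g)`; here `f₁` is a linear parameter, found with associated primes and Artin-Rees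
(`exists_parameter`), and `f₁, f₂ ∈ W` generate the function field. Its intersection with the curve
is one point with residue field `Ω = F(u)`, of degree `s` over `K`, and restriction to it has kernel
`ℓ * satB W i` on `satB W (i + 1)` (`pencil_ker`). The role of general position is played by the fact
that `Ω / K` has no proper intermediate field (`primitive_of_relation`): the equation of `f₂` over `K`
is obtained from the irreducible equation of a plane model of the curve by a birational shear, and
so is irreducible over `F(u)` apart from the factor `y - f₂`.

For such an extension the Cauchy-Davenport inequality `dim A B ≥ dim A + dim B - 1` holds for
subspaces `A, B` with `A B ≠ Ω` (`linear_cauchy_davenport`). The image `V` of `W` in `Ω` has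
dimension `r - 1 > s / 2`, hence `V² = Ω`. Therefore `dim satB W i` grows by exactly `s` from degree
`1` on, which gives (i) and (ii), whereas `dim Wⁱ` grows by at least `s`. If it grows by exactly `s`
once, a duality argument with the Cauchy-Davenport inequality shows that it does so from then on
(`GenericSection.ker_propagate`), so that `Wⁱ⁺¹` is already saturated. This is (iii), and (iv)
follows by induction.
-/

open scoped BigOperators

noncomputable section

/-- The homogeneous coordinate ring of `ℙ^{n-1}` over `ℂ`: polynomials in `n` variables. -/
abbrev MPoly (n : ℕ) : Type := MvPolynomial (Fin n) ℂ

/-- An ideal is homogeneous if it contains all homogeneous components of its members. -/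
def IsHomogIdeal {n : ℕ} (I : Ideal (MPoly n)) : Prop :=
  ∀ f ∈ I, ∀ k : ℕ, MvPolynomial.homogeneousComponent k f ∈ I

/-- The degree-`k` graded piece of the homogeneous coordinate ring of the subscheme `V(I)`. -/
def degQ {n : ℕ} (I : Ideal (MPoly n)) (k : ℕ) : Submodule ℂ (MPoly n ⧸ I) :=
  (MvPolynomial.homogeneousSubmodule (Fin n) ℂ k).map (Ideal.Quotient.mkₐ ℂ I).toLinearMap

/-- The graded pieces, indexed by `ℤ` (zero in negative degrees). -/
def degQZ {n : ℕ} (I : Ideal (MPoly n)) (t : ℤ) : Submodule ℂ (MPoly n ⧸ I) :=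
  if 0 ≤ t then degQ I t.toNat else ⊥

/-- The Hilbert function of the closed subscheme `V(I) ⊆ ℙ^{n-1}`. -/
def hilbNat {n : ℕ} (I : Ideal (MPoly n)) (t : ℤ) : ℕ :=
  Module.finrank ℂ (degQZ I t)

/-- The Hilbert function, as an integer-valued function. -/
def hilbZ {n : ℕ} (I : Ideal (MPoly n)) (t : ℤ) : ℤ := (hilbNat I t : ℤ)

/-- The irrelevant maximal ideal `(x_0, …, x_{n-1})`. -/
def mId (n : ℕ) : Ideal (MPoly n) := Ideal.span (Set.range MvPolynomial.X)

/-- The space of degree-`t` graded module homomorphisms `m^k → R/I`. -/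
def gradedHomSub {n : ℕ} (I : Ideal (MPoly n)) (k : ℕ) (t : ℤ) :
    Submodule ℂ ((mId n ^ k : Ideal (MPoly n)) →ₗ[MPoly n] (MPoly n ⧸ I)) where
  carrier := {φ | ∀ (j : ℕ) (f : MPoly n) (hf : f ∈ mId n ^ k),
    f ∈ MvPolynomial.homogeneousSubmodule (Fin n) ℂ j → φ ⟨f, hf⟩ ∈ degQZ I ((j : ℤ) + t)}
  add_mem' := by
    intro a b ha hb j f hf hj
    simpa using Submodule.add_mem _ (ha j f hf hj) (hb j f hf hj)
  zero_mem' := by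
    intro j f hf hj
    simpa using Submodule.zero_mem _
  smul_mem' := by
    intro c φ hφ j f hf hj
    simpa using Submodule.smul_mem _ c (hφ j f hf hj)

/-- `h⁰(X, 𝒪_X(t))` for `X = V(I)`: the stable value of the dimensions of the graded Hom
modules `Hom(m^k, R/I)_t` (the Deligne formula for twisted global sections). -/
def h0Nat {n : ℕ} (I : Ideal (MPoly n)) (t : ℤ) : ℕ :=
  ⨆ k : ℕ, Module.finrank ℂ (gradedHomSub I k t)

/-- `h¹(ℙ^{n-1}, 𝓘_X(t)) = h⁰(X, 𝒪_X(t)) − h_X(t)` (valid for the saturated ideal of `X`). -/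
def h1INat {n : ℕ} (I : Ideal (MPoly n)) (t : ℤ) : ℕ := h0Nat I t - hilbNat I t

/-- The dimension over `ℂ` of the Hartshorne–Rao module `M(X) = ⊕_t H¹(ℙ, 𝓘_X(t))`. -/
def raoDim {n : ℕ} (I : Ideal (MPoly n)) : ℕ := ∑ᶠ t : ℤ, h1INat I t

/-- Arithmetically Cohen–Macaulay (for an integral curve): the Hartshorne–Rao module vanishes. -/
def IsACM {n : ℕ} (I : Ideal (MPoly n)) : Prop := ∀ t : ℤ, h0Nat I t = hilbNat I t

/-- Saturation of an ideal with respect to the irrelevant maximal ideal. -/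
def satIdeal {n : ℕ} (I : Ideal (MPoly n)) : Ideal (MPoly n) where
  carrier := {f | ∃ k : ℕ, ∀ j : Fin n, MvPolynomial.X j ^ k * f ∈ I}
  zero_mem' := ⟨0, fun j => by simpa using I.zero_mem⟩
  add_mem' := by
    rintro f g ⟨k, hk⟩ ⟨l, hl⟩
    refine ⟨k + l, fun j => ?_⟩
    have h1 : MvPolynomial.X (R := ℂ) j ^ (k + l) * (f + g)
        = MvPolynomial.X j ^ l * (MvPolynomial.X j ^ k * f)
          + MvPolynomial.X j ^ k * (MvPolynomial.X j ^ l * g) := by ring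
    rw [h1]
    exact I.add_mem (I.mul_mem_left _ (hk j)) (I.mul_mem_left _ (hl j))
  smul_mem' := by
    rintro c f ⟨k, hk⟩
    refine ⟨k, fun j => ?_⟩
    have h1 : MvPolynomial.X (R := ℂ) j ^ k * (c • f) = c * (MvPolynomial.X j ^ k * f) := by
      rw [smul_eq_mul]; ring
    rw [h1]
    exact I.mul_mem_left _ (hk j)

/-- The hyperplane section of `V(I)` by the hyperplane `{ℓ = 0}`, as a closed subscheme
(its saturated homogeneous ideal). -/
def sect {n : ℕ} (I : Ideal (MPoly n)) (ℓ : MPoly n) : Ideal (MPoly n) :=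
  satIdeal (I ⊔ Ideal.span {ℓ})

/-- A property `P` holds for a *general* `k`-tuple of linear forms (hyperplanes): it holds on a
nonempty Zariski-open subset of the space of coefficients. -/
def GenericForms (n k : ℕ) (P : (Fin k → MPoly n) → Prop) : Prop :=
  ∃ Q : MvPolynomial (Fin k × Fin n) ℂ, Q ≠ 0 ∧
    ∀ c : Fin k → Fin n → ℂ, MvPolynomial.eval (fun p => c p.1 p.2) Q ≠ 0 →
      P fun t => ∑ j : Fin n, MvPolynomial.C (c t j) * MvPolynomial.X j

/-- `V(I) ⊆ ℙ^{n-1}` is nondegenerate: contained in no hyperplane. -/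
def Nondeg {n : ℕ} (I : Ideal (MPoly n)) : Prop :=
  ∀ f ∈ MvPolynomial.homogeneousSubmodule (Fin n) ℂ 1, f ∈ I → f = 0

/-- `V(I)` is an integral curve: `I` homogeneous prime, with cone of Krull dimension 2. -/
def IsCurve {n : ℕ} (I : Ideal (MPoly n)) : Prop :=
  IsHomogIdeal I ∧ I.IsPrime ∧ ringKrullDim (MPoly n ⧸ I) = 2

/-- `V(I)` is an integral surface: `I` homogeneous prime, with cone of Krull dimension 3. -/
def IsSurface {n : ℕ} (I : Ideal (MPoly n)) : Prop :=
  IsHomogIdeal I ∧ I.IsPrime ∧ ringKrullDim (MPoly n ⧸ I) = 3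

/-- The curve `V(I)` has degree `d` and arithmetic genus `g`: its Hilbert polynomial is
`d·t + 1 − g`. -/
def CurveInv {n : ℕ} (I : Ideal (MPoly n)) (d g : ℤ) : Prop :=
  ∃ N : ℤ, ∀ t : ℤ, N ≤ t → hilbZ I t = d * t + 1 - g

/-- The surface `V(I)` has degree `s`, sectional genus `π` and arithmetic genus `pa`:
its Hilbert polynomial is `s·choose(t+1, 2) + (1 − π)·t + 1 + pa`. -/
def SurfInv {n : ℕ} (I : Ideal (MPoly n)) (s π pa : ℤ) : Prop :=
  ∃ N : ℤ, ∀ t : ℤ, N ≤ t → hilbZ I t = s * (t * (t + 1) / 2) + (1 - π) * t + 1 + pa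

/-- `V(IC)` is not contained in any integral surface of degree `< s`. -/
def NotInSurfDegLT {n : ℕ} (IC : Ideal (MPoly n)) (s : ℤ) : Prop :=
  ∀ (T : Ideal (MPoly n)) (s' π' pa' : ℤ), IsSurface T → SurfInv T s' π' pa' → s' < s →
    ¬ T ≤ IC

/-- `V(IC)` is not contained in any integral surface of degree `s` with sectional genus `> π`. -/
def NotInSurfSecGT {n : ℕ} (IC : Ideal (MPoly n)) (s π : ℤ) : Prop :=
  ∀ (T : Ideal (MPoly n)) (π' pa' : ℤ), IsSurface T → SurfInv T s π' pa' → π < π' →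
    ¬ T ≤ IC

/-- `V(IC)` is not contained in any integral surface of degree `s` with arithmetic genus `< p`. -/
def NotInSurfGenLT {n : ℕ} (IC : Ideal (MPoly n)) (s p : ℤ) : Prop :=
  ∀ (T : Ideal (MPoly n)) (π' pa' : ℤ), IsSurface T → SurfInv T s π' pa' → pa' < p →
    ¬ T ≤ IC

/-- `binom2 z = z.choose 2` for integers. -/
def binom2 (z : ℤ) : ℤ := z * (z - 1) / 2

/-- The bound `G*(r,d,s,π,p)` of Di Gennaro–Franco, with `m = (d-1)/s`, `ε = (d-1) % s`. -/
def Gstar (r d s π p : ℤ) : ℤ :=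
  binom2 ((d - 1) / s) * s + ((d - 1) / s) * ((d - 1) % s + π) - p
    + max 0 ((2 * π - (s - 1 - (d - 1) % s)) / 2)

/-- The numerical function `h_{r,d,s,π}`. -/
def hF (r d s π : ℤ) (i : ℤ) : ℤ :=
  if 1 ≤ i ∧ i ≤ (d - 1) / s then
    1 - π + i * s - max 0 ((s - r + 1) - π - i + 1)
  else if i = (d - 1) / s + 1 then
    d - max 0 ((2 * π - (s - 1 - (d - 1) % s)) / 2)
  else if (d - 1) / s + 2 ≤ i then d
  else 0

/-- The threshold `d₀(r)`. -/
def d0 (r : ℤ) : ℤ :=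
  if r ≤ 6 then 16 * (r - 2) * (2 * r - 3)
  else if r ≤ 11 then 8 * (r - 2) ^ 3
  else 2 ^ (r.toNat + 1)

end
noncomputable section

/-- The affine cone of `V(I)`: common zeroes of the elements of `I`. -/
def zeroCone {n : ℕ} (I : Ideal (MPoly n)) : Set (Fin n → ℂ) :=
  {a | ∀ f ∈ I, MvPolynomial.eval a f = 0}

/-- Jacobian-criterion smoothness: at every nonzero point of the affine cone (of dimension `c`)
the gradients of the equations span a subspace of dimension `n - c`. -/
def IsSmooth {n : ℕ} (I : Ideal (MPoly n)) (c : ℕ) : Prop :=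
  ∀ a ∈ zeroCone I, a ≠ 0 →
    Module.finrank ℂ (Submodule.span ℂ
      {g : Fin n → ℂ | ∃ f ∈ I, g = fun j => MvPolynomial.eval a (MvPolynomial.pderiv j f)})
      = n - c

/-- Castelnuovo's bound for the genus of a nondegenerate integral curve of degree `d`
in `ℙ^R`. -/
def castelG (R d : ℤ) : ℤ :=
  binom2 ((d - 1) / (R - 1)) * (R - 1) + ((d - 1) / (R - 1)) * ((d - 1) % (R - 1))

/-- The ideal of the projective cone (from `ℙ^{n-1}` to `ℙ^n`) over `V(I)`. -/
def coneIdeal {n : ℕ} (I : Ideal (MPoly n)) : Ideal (MPoly (n + 1)) :=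
  Ideal.map (MvPolynomial.rename (Fin.castSucc : Fin n → Fin (n + 1))) I

/-- `J` is the (saturated homogeneous) ideal of a line in `ℙ^{n-1}`: it is generated by
`n - 2` linearly independent linear forms. -/
def IsLineIdeal {n : ℕ} (J : Ideal (MPoly n)) : Prop :=
  ∃ V : Submodule ℂ (MPoly n), V ≤ MvPolynomial.homogeneousSubmodule (Fin n) ℂ 1 ∧
    Module.finrank ℂ V = n - 2 ∧ J = Ideal.span (V : Set (MPoly n))

/-- `V(T) ⊆ ℙ^{n-1}` is a smooth rational normal scroll surface: a smooth nondegenerate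
integral surface of minimal degree `n - 2` (with sectional and arithmetic genus `0`)
containing a line (which rules out the Veronese surface). -/
def IsSmoothRNScroll {n : ℕ} (T : Ideal (MPoly n)) : Prop :=
  IsSurface T ∧ Nondeg T ∧ IsSmooth T 3 ∧ SurfInv T ((n : ℤ) - 2) 0 0 ∧
    ∃ J : Ideal (MPoly n), IsLineIdeal J ∧ T ≤ J

/-- The linear projection on points determined by the matrix `L`. -/
def projPt {nb ns : ℕ} (L : Fin ns → Fin nb → ℂ) (a : Fin nb → ℂ) : Fin ns → ℂ :=
  fun t => ∑ j, L t j * a j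

/-- The substitution algebra homomorphism determined by the matrix `L` (pullback of the
linear projection `ℙ^{nb-1} ⇢ ℙ^{ns-1}`). -/
def substHom {nb ns : ℕ} (L : Fin ns → Fin nb → ℂ) : MPoly ns →ₐ[ℂ] MPoly nb :=
  MvPolynomial.aeval fun t => ∑ j, MvPolynomial.C (L t j) * MvPolynomial.X j

/-- The linear projection given by `L` maps `V(I')` isomorphically onto `V(I)`: the center of
projection misses `V(I')`, `V(I)` is the image, and the projection is (projectively) bijective
from `V(I')` onto `V(I)`. -/
def IsIsoProjection {nb ns : ℕ} (L : Fin ns → Fin nb → ℂ)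
    (I' : Ideal (MPoly nb)) (I : Ideal (MPoly ns)) : Prop :=
  I = I'.comap (substHom L) ∧
  (∀ a ∈ zeroCone I', a ≠ 0 → projPt L a ≠ 0) ∧
  (∀ a ∈ zeroCone I', ∀ b ∈ zeroCone I', a ≠ 0 → b ≠ 0 →
    (∃ c : ℂ, c ≠ 0 ∧ projPt L a = c • projPt L b) → ∃ c : ℂ, c ≠ 0 ∧ a = c • b) ∧
  (∀ y ∈ zeroCone I, y ≠ 0 → ∃ a ∈ zeroCone I', a ≠ 0 ∧ ∃ c : ℂ, c ≠ 0 ∧ y = c • projPt L a)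

/-- `t` bounds the Castelnuovo–Mumford regularity of the surface `V(I) ⊆ ℙ^{n-1}`:
for every `t' ≥ t`, `H^i(ℙ, 𝓘(t'-i)) = 0` for all `i ≥ 1`, expressed through the standard
inductive characterization by successive general hyperplane sections. -/
def IsRegBound {n : ℕ} (I : Ideal (MPoly n)) (t : ℤ) : Prop :=
  GenericForms n 2 fun L => ∀ t' : ℤ, t ≤ t' →
    h1INat I (t' - 1) = 0 ∧ h1INat (sect I (L 0)) (t' - 1) = 0 ∧
      h1INat (sect (sect I (L 0)) (L 1)) (t' - 1) = 0

end

/-! ### Linear Cauchy-Davenport inequality -/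

section CauchyDavenport

theorem Submodule.finrank_map_mulLeft_field {K Ω : Type*} [Field K] [Field Ω] [Algebra K Ω]
    (a : Ω) (ha : a ≠ 0) (A : Submodule K Ω) :
    Module.finrank K (A.map (LinearMap.mulLeft K a)) = Module.finrank K A :=
  (Submodule.equivMapOfInjective (LinearMap.mulLeft K a)
    (mul_right_injective₀ ha) A).finrank_eq.symm

/-- The Dyson transform: if some `b ∈ B` has `b A ⊄ B`, replacing `(A, B)` by
`(A ∩ b⁻¹ B, b A + B)` keeps the sum of the dimensions, shrinks `A` and does not enlarge `A B`.
Otherwise the stabilizer of `B` is an intermediate field containing `A`. -/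
theorem cd_of_one_mem {K Ω : Type*} [Field K] [Field Ω] [Algebra K Ω]
    [FiniteDimensional K Ω] (hprim : ∀ H : IntermediateField K Ω, H = ⊥ ∨ H = ⊤) (n : ℕ) :
    ∀ A B : Submodule K Ω, Module.finrank K A = n → (1 : Ω) ∈ A → B ≠ ⊥ →
      A * B = ⊤ ∨ Module.finrank K A + Module.finrank K B ≤ Module.finrank K ↥(A * B) + 1 := by
  induction n using Nat.strong_induction_on with
  | _ n ih =>
  intro A B hn h1 hB
  have hBAB : B ≤ A * B := fun b hb => by simpa using Submodule.mul_mem_mul h1 hb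
  by_cases hst : ∀ b ∈ B, ∀ a ∈ A, b * a ∈ B
  · -- the stabilizer of `B` is an intermediate field containing `A`
    let S : Subalgebra K Ω :=
      { carrier := {x | ∀ b ∈ B, b * x ∈ B}
        mul_mem' := fun {x y} hx hy b hb => by
          rw [← mul_assoc]; exact hy _ (hx _ hb)
        add_mem' := fun {x y} hx hy b hb => by
          rw [mul_add]; exact B.add_mem (hx _ hb) (hy _ hb)
        algebraMap_mem' := fun k b hb => by
          rw [mul_comm, ← Algebra.smul_def]; exact B.smul_mem _ hb }
    let H : IntermediateField K Ω := S.toIntermediateField' (Subalgebra.isField_of_algebraic S)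
    have hAH : ∀ a ∈ A, a ∈ H := fun a ha b hb => hst b hb a ha
    rcases hprim H with hH | hH
    · right
      have hA : Module.finrank K A ≤ 1 := by
        have : A ≤ (⊥ : IntermediateField K Ω).toSubalgebra.toSubmodule := by
          intro a ha
          have := hAH a ha
          rw [hH] at this
          exact this
        have h2 := Submodule.finrank_mono this
        have h3 : Module.finrank K (⊥ : IntermediateField K Ω).toSubalgebra.toSubmodule = 1 :=
          IntermediateField.finrank_bot
        omega
      have := Submodule.finrank_mono hBAB
      omega
    · left
      obtain ⟨b, hb, hb0⟩ := Submodule.exists_mem_ne_zero_of_ne_bot hB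
      rw [eq_top_iff]
      intro x _
      apply hBAB
      have hx : b⁻¹ * x ∈ H := by rw [hH]; trivial
      have := hx b hb
      rwa [mul_inv_cancel_left₀ hb0] at this
  · push Not at hst
    obtain ⟨b, hb, a, ha, hab⟩ := hst
    have hb0 : b ≠ 0 := by rintro rfl; simp at hab
    set m := LinearMap.mulLeft K b with hm
    set A1 := A ⊓ B.comap m with hA1
    set B1 := A.map m ⊔ B with hB1
    have hmap : A1.map m = A.map m ⊓ B := by
      rw [hA1]
      ext y
      constructor
      · rintro ⟨x, ⟨hx, hxB⟩, rfl⟩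
        exact ⟨⟨x, hx, rfl⟩, hxB⟩
      · rintro ⟨⟨x, hx, rfl⟩, hxB⟩
        exact ⟨x, ⟨hx, hxB⟩, rfl⟩
    have hf1 : Module.finrank K A1 = Module.finrank K ↥(A.map m ⊓ B) := by
      rw [← hmap, hm, Submodule.finrank_map_mulLeft_field b hb0]
    have hf2 := Submodule.finrank_sup_add_finrank_inf_eq (A.map m) B
    rw [hm, Submodule.finrank_map_mulLeft_field b hb0, ← hm, ← hf1, ← hB1] at hf2
    have hlt : A1 < A := lt_of_le_of_ne inf_le_left (by
      intro h
      have : a ∈ A1 := by rw [h]; exact ha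
      exact hab this.2)
    have hlt' := Submodule.finrank_lt_finrank_of_lt hlt
    have hsub : A1 * B1 ≤ A * B := by
      rw [hB1, Submodule.mul_sup]
      refine sup_le ?_ (mul_le_mul' inf_le_left le_rfl)
      rw [Submodule.mul_le]
      rintro x ⟨_, hx⟩ y ⟨z, hz, rfl⟩
      have : x * (m z) = z * m x := by simp [hm]; ring
      rw [this]
      exact Submodule.mul_mem_mul hz hx
    have h11 : (1 : Ω) ∈ A1 := ⟨h1, by simpa [hm] using hb⟩
    have hB1ne : B1 ≠ ⊥ := fun h => hB (by
      rw [eq_bot_iff, ← h]; exact le_sup_right)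
    rcases ih _ (hn ▸ hlt') A1 B1 rfl h11 hB1ne with h | h
    · left
      rw [eq_top_iff, ← h]; exact hsub
    · right
      have := Submodule.finrank_mono hsub
      omega

/-- The Cauchy-Davenport inequality for subspaces of a finite field extension without proper
intermediate fields. -/
theorem linear_cauchy_davenport {K Ω : Type*} [Field K] [Field Ω] [Algebra K Ω]
    [FiniteDimensional K Ω] (hprim : ∀ H : IntermediateField K Ω, H = ⊥ ∨ H = ⊤)
    (A B : Submodule K Ω) (hA : A ≠ ⊥) (hB : B ≠ ⊥) :
      A * B = ⊤ ∨ Module.finrank K A + Module.finrank K B ≤ Module.finrank K ↥(A * B) + 1 := by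
  obtain ⟨a, ha, ha0⟩ := Submodule.exists_mem_ne_zero_of_ne_bot hA
  have hai := inv_ne_zero ha0
  have hmul : (A.map (LinearMap.mulLeft K a⁻¹)) * B = (A * B).map (LinearMap.mulLeft K a⁻¹) := by
    apply le_antisymm
    · rw [Submodule.mul_le]
      rintro _ ⟨x, hx, rfl⟩ y hy
      exact ⟨x * y, Submodule.mul_mem_mul hx hy, by simp [mul_assoc]⟩
    · rw [Submodule.map_le_iff_le_comap, Submodule.mul_le]
      intro x hx y hy
      have := Submodule.mul_mem_mul (Submodule.mem_map_of_mem (f := LinearMap.mulLeft K a⁻¹) hx) hy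
      simpa [mul_assoc] using this
  have := cd_of_one_mem hprim _ (A.map (LinearMap.mulLeft K a⁻¹)) B rfl
    ⟨a, ha, by simp [ha0]⟩ hB
  rw [hmul, Submodule.finrank_map_mulLeft_field _ hai,
    Submodule.finrank_map_mulLeft_field _ hai] at this
  refine this.imp (fun h => ?_) id
  rw [eq_top_iff]
  intro x _
  have hx : a⁻¹ * x ∈ (A * B).map (LinearMap.mulLeft K a⁻¹) := by rw [h]; trivial
  obtain ⟨y, hy, hyx⟩ := hx
  have : y = x := mul_left_cancel₀ hai hyx
  exact this ▸ hy

end CauchyDavenport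

/-! ### Saturation, base change and duality -/

section

open TensorProduct

section Saturation

variable {k F : Type*} [Field k] [Field F] [Algebra k F]

/-- The saturation of the graded algebra `⨁ Wⁱ` in degree `t`: all `f` with
`f Wʲ ⊆ Wʲ⁺ᵗ` for some `j`. -/
def satB (W : Submodule k F) (t : ℕ) : Submodule k F := ⨆ j : ℕ, W ^ (j + t) / W ^ j

theorem satB_step_mono (W : Submodule k F) (t : ℕ) :
    Monotone fun j : ℕ => W ^ (j + t) / W ^ j := by
  refine monotone_nat_of_le_succ fun j f hf => ?_
  rw [Submodule.mem_div_iff_forall_mul_mem] at hf ⊢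
  intro y hy
  have h : W ^ (j + 1) ≤ (W ^ (j + 1 + t)).comap (LinearMap.mulLeft k f) := by
    rw [pow_succ, Submodule.mul_le]
    intro a ha b hb
    have := Submodule.mul_mem_mul (hf a ha) hb
    rw [← pow_succ] at this
    simpa [mul_assoc, add_right_comm] using this
  exact h hy

theorem mem_satB {W : Submodule k F} {t : ℕ} {f : F} :
    f ∈ satB W t ↔ ∃ j : ℕ, ∀ y ∈ W ^ j, f * y ∈ W ^ (j + t) := by
  rw [satB, Submodule.mem_iSup_of_directed _ (satB_step_mono W t).directed_le]
  simp only [Submodule.mem_div_iff_forall_mul_mem]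

theorem mem_satB_of_le {W : Submodule k F} {t : ℕ} {f : F} {j j' : ℕ} (h : j ≤ j')
    (hf : ∀ y ∈ W ^ j, f * y ∈ W ^ (j + t)) : ∀ y ∈ W ^ j', f * y ∈ W ^ (j' + t) := by
  have := satB_step_mono W t h (Submodule.mem_div_iff_forall_mul_mem.2 hf)
  exact Submodule.mem_div_iff_forall_mul_mem.1 this

theorem pow_le_satB (W : Submodule k F) (t : ℕ) : W ^ t ≤ satB W t := fun f hf =>
  mem_satB.2 ⟨0, fun y hy => by
    rw [add_comm]; exact pow_add W t 0 ▸ Submodule.mul_mem_mul hf hy⟩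

theorem mul_satB_le (W : Submodule k F) (i t : ℕ) : W ^ i * satB W t ≤ satB W (i + t) := by
  rw [Submodule.mul_le]
  intro a ha b hb
  obtain ⟨j, hj⟩ := mem_satB.1 hb
  refine mem_satB.2 ⟨j, fun y hy => ?_⟩
  have := Submodule.mul_mem_mul ha (hj y hy)
  rw [← pow_add] at this
  rw [mul_assoc]
  convert this using 2
  omega

theorem pow_mono_of_one_mem {R A : Type*} [CommSemiring R] [CommSemiring A] [Algebra R A]
    {W : Submodule R A} (h1 : (1 : A) ∈ W) : Monotone fun i : ℕ => W ^ i :=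
  monotone_nat_of_le_succ fun i f hf => by
    simpa [pow_succ] using Submodule.mul_mem_mul hf h1

theorem satB_mono {W : Submodule k F} (h1 : (1 : F) ∈ W) : Monotone (satB W) :=
  monotone_nat_of_le_succ fun i f hf => by
    obtain ⟨j, hj⟩ := mem_satB.1 hf
    exact mem_satB.2 ⟨j, fun y hy => pow_mono_of_one_mem h1 (Nat.le_succ _) (hj y hy)⟩

/-- Over an algebraically closed field only the constants stabilize a nonzero
finite-dimensional space. -/
theorem satB_zero [IsAlgClosed k] (W : Submodule k F) [FiniteDimensional k W]
    (h1 : (1 : F) ∈ W) : satB W 0 = 1 := by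
  apply le_antisymm
  · intro f hf
    obtain ⟨j, hj⟩ := mem_satB.1 hf
    have h1j : (1 : F) ∈ W ^ j := Submodule.one_le.1 (one_le_pow₀ (Submodule.one_le.2 h1))
    have : Module.Finite k ↥(W ^ j) :=
      Module.Finite.iff_fg.2 ((Module.Finite.iff_fg.1 ‹FiniteDimensional k W›).pow j)
    have : Nontrivial ↥(W ^ j) := ⟨⟨⟨1, h1j⟩, 0, fun h => one_ne_zero (congrArg Subtype.val h)⟩⟩
    let φ : Module.End k ↥(W ^ j) := (LinearMap.mulLeft k f).restrict hj
    obtain ⟨c, hc⟩ := Module.End.exists_eigenvalue φ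
    obtain ⟨v, hv⟩ := hc.exists_hasEigenvector
    have h := congrArg Subtype.val hv.apply_eq_smul
    have hv0 : (v : F) ≠ 0 := fun h => hv.2 (Subtype.ext h)
    have h2 : f * v = algebraMap k F c * v := by
      rw [← Algebra.smul_def]; exact h
    have h3 := mul_right_cancel₀ hv0 h2
    rw [h3]
    exact Submodule.algebraMap_mem c
  · rw [← pow_zero W]; exact pow_le_satB W 0

end Saturation

section BaseChange

variable {k F : Type*} (K : Type*) [Field k] [Field F] [Algebra k F] [Field K] [Algebra k K]

theorem bc_eq_span (E : Submodule k F) :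
    E.baseChange K = Submodule.span K ((fun f : F => (1 : K) ⊗ₜ[k] f) '' E) := by
  rw [Submodule.baseChange_eq_span]; rfl

theorem bc_mul (E E' : Submodule k F) :
    (E * E').baseChange K = E.baseChange K * E'.baseChange K := by
  apply le_antisymm
  · rw [bc_eq_span, Submodule.span_le]
    rintro _ ⟨f, hf, rfl⟩
    have h : E * E' ≤ ((E.baseChange K * E'.baseChange K).restrictScalars k).comap
        (TensorProduct.mk k K F 1) := by
      rw [Submodule.mul_le]
      intro a ha b hb
      have := Submodule.mul_mem_mul (Submodule.tmul_mem_baseChange_of_mem (1 : K) ha)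
        (Submodule.tmul_mem_baseChange_of_mem (1 : K) hb)
      simpa using this
    exact h hf
  · rw [bc_eq_span K E, bc_eq_span K E', Submodule.span_mul_span, Submodule.span_le]
    rintro _ ⟨_, ⟨a, ha, rfl⟩, _, ⟨b, hb, rfl⟩, rfl⟩
    have := Submodule.tmul_mem_baseChange_of_mem (1 : K) (Submodule.mul_mem_mul ha hb)
    simpa using this

theorem bc_one : (1 : Submodule k F).baseChange K = 1 := by
  rw [Submodule.one_eq_span, Submodule.baseChange_span, Submodule.one_eq_span]
  congr 1
  simp [Algebra.TensorProduct.one_def]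

theorem bc_pow (E : Submodule k F) (n : ℕ) : (E ^ n).baseChange K = E.baseChange K ^ n := by
  induction n with
  | zero => simp [bc_one]
  | succ n ih => rw [pow_succ, pow_succ, bc_mul, ih]

theorem bc_finrank (E : Submodule k F) :
    Module.finrank K (E.baseChange K) = Module.finrank k E := by
  rw [← (Submodule.toBaseChange.toLinearEquiv K E).finrank_eq, Module.finrank_baseChange]

theorem bc_fg_iff (E : Submodule k F) : (E.baseChange K).FG ↔ E.FG := by
  rw [← Module.Finite.iff_fg, ← Module.Finite.iff_fg]
  constructor
  · intro h
    have : Module.Finite K (K ⊗[k] E) :=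
      Module.Finite.equiv (Submodule.toBaseChange.toLinearEquiv K E).symm
    exact Module.Finite.of_finite_tensorProduct_of_faithfullyFlat K
  · intro h
    exact Module.Finite.equiv (Submodule.toBaseChange.toLinearEquiv K E)

/-- A subspace of a finite-dimensional space is everything if it is so after base change. -/
theorem eq_of_bc_le {E E' : Submodule k F} (hE : E.FG) (hE' : E'.FG) (hle : E' ≤ E)
    (h : E.baseChange K ≤ E'.baseChange K) : E' = E := by
  have : FiniteDimensional k E := Module.Finite.iff_fg.2 hE
  have : FiniteDimensional K (E'.baseChange K) :=
    Module.Finite.iff_fg.2 ((bc_fg_iff K E').2 hE')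
  refine Submodule.eq_of_le_of_finrank_le hle ?_
  rw [← bc_finrank K E, ← bc_finrank K E']
  exact Submodule.finrank_mono h

end BaseChange

section Rank

variable {K M N : Type*} [Field K] [AddCommGroup M] [Module K M] [AddCommGroup N] [Module K N]

theorem finrank_map_add_finrank_inf_ker (g : M →ₗ[K] N) (E : Submodule K M) (hE : E.FG) :
    Module.finrank K (E.map g) + Module.finrank K ↥(E ⊓ LinearMap.ker g) =
      Module.finrank K E := by
  have : FiniteDimensional K E := Module.Finite.iff_fg.2 hE
  have h := LinearMap.finrank_range_add_finrank_ker (g.domRestrict E)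
  rw [LinearMap.range_domRestrict] at h
  rw [← h, LinearMap.ker_domRestrict]
  congr 1
  rw [← Submodule.map_comap_subtype]
  exact (Submodule.equivMapOfInjective E.subtype E.subtype_injective
    (Submodule.comap E.subtype (LinearMap.ker g))).finrank_eq.symm

end Rank

section TraceForm

variable {K Ω : Type*} [Field K] [Field Ω] [Algebra K Ω]

/-- The symmetric bilinear form `(x, y) ↦ τ (x y)`. -/
noncomputable def mulForm (τ : Ω →ₗ[K] K) : LinearMap.BilinForm K Ω :=
  (LinearMap.mul K Ω).compr₂ τ

@[simp] theorem mulForm_apply (τ : Ω →ₗ[K] K) (x y : Ω) : mulForm τ x y = τ (x * y) := rfl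

theorem mulForm_nondeg (τ : Ω →ₗ[K] K) (hτ : τ ≠ 0) : (mulForm τ).Nondegenerate := by
  have key : ∀ x : Ω, (∀ y, τ (x * y) = 0) → x = 0 := by
    intro x hx
    by_contra h0
    refine hτ (LinearMap.ext fun z => ?_)
    simpa [mul_inv_cancel_left₀ h0] using hx (x⁻¹ * z)
  refine ⟨fun x hx => key x hx, fun x hx => key x fun y => ?_⟩
  rw [mul_comm]; exact hx y

/-- Spaces `U, V` with `τ (U V) = 0` are orthogonal for a nondegenerate form. -/
theorem finrank_perp [FiniteDimensional K Ω] (τ : Ω →ₗ[K] K) (hτ : τ ≠ 0) (U V : Submodule K Ω)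
    (h : ∀ u ∈ U, ∀ v ∈ V, τ (u * v) = 0) :
    Module.finrank K U + Module.finrank K V ≤ Module.finrank K Ω := by
  have h1 := LinearMap.BilinForm.finrank_orthogonal (mulForm_nondeg τ hτ) V
  have h2 : U ≤ (mulForm τ).orthogonal V := fun u hu v hv => by
    change τ (v * u) = 0
    rw [mul_comm]; exact h u hu v hv
  have h3 := Submodule.finrank_mono h2
  have h4 := Submodule.finrank_le V
  omega

end TraceForm

end

/-! ### Generic hyperplane sections -/

section

open TensorProduct

/-- Abstract data of a generic hyperplane section of the curve embedded by `W`. The linear form `ℓ`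
has coefficients in an extension `K` of `k`, and `ev` restricts functions to its zero locus, which
is a single point with residue field `Ω` over `K`. The fields say that `ℓ` is a nonzerodivisor
generating the kernel of restriction on the saturation, that `W` generates `Ω` over `K`, and that
`Ω / K` has no proper intermediate field; the last point takes the place of the general position
of the points of a hyperplane section. -/
structure GenericSection {k K F Ω : Type*} [Field k] [Field K] [Field F] [Field Ω]
    [Algebra k K] [Algebra k F] [Algebra K Ω] (W : Submodule k F)
    (ev : K ⊗[k] F →ₐ[K] Ω) (ℓ : K ⊗[k] F) : Prop where
  mem : ℓ ∈ W.baseChange K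
  regular : ∀ ζ, ℓ * ζ = 0 → ζ = 0
  ev_eq_zero : ev ℓ = 0
  ker : ∀ i : ℕ, ∀ ζ ∈ (satB W (i + 1)).baseChange K, ev ζ = 0 →
    ∃ ζ' ∈ (satB W i).baseChange K, ζ = ℓ * ζ'
  generate : ∀ S : Subalgebra K Ω, FiniteDimensional K S →
    (∀ f ∈ W, ev (1 ⊗ₜ f) ∈ S) → S = ⊤
  primitive : FiniteDimensional K Ω → ∀ H : IntermediateField K Ω, H = ⊥ ∨ H = ⊤

namespace GenericSection

variable {k K F Ω : Type*} [Field k] [Field K] [Field F] [Field Ω]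
    [Algebra k K] [Algebra k F] [Algebra K Ω] {W : Submodule k F}
    {ev : K ⊗[k] F →ₐ[K] Ω} {ℓ : K ⊗[k] F}

/-- The image in `Ω` of the base change of `E`. -/
abbrev im (ev : K ⊗[k] F →ₐ[K] Ω) (E : Submodule k F) : Submodule K Ω :=
  (E.baseChange K).map ev.toLinearMap

/-- The multiples of `ℓ` by the base change of `E`. -/
abbrev mulℓ (K : Type*) [Field K] [Algebra k K] (ℓ : K ⊗[k] F) (E : Submodule k F) :
    Submodule K (K ⊗[k] F) :=
  (E.baseChange K).map (LinearMap.mulLeft K ℓ)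

theorem im_pow (ev : K ⊗[k] F →ₐ[K] Ω) (E : Submodule k F) (n : ℕ) :
    im ev (E ^ n) = im ev E ^ n := by
  rw [im, bc_pow, Submodule.map_pow]

theorem im_mul (ev : K ⊗[k] F →ₐ[K] Ω) (E E' : Submodule k F) :
    im ev (E * E') = im ev E * im ev E' := by
  rw [im, bc_mul, Submodule.map_mul]

theorem im_mono (ev : K ⊗[k] F →ₐ[K] Ω) {E E' : Submodule k F} (h : E ≤ E') :
    im ev E ≤ im ev E' := Submodule.map_mono (Submodule.baseChange_mono K h)

theorem one_mem_im (ev : K ⊗[k] F →ₐ[K] Ω) {E : Submodule k F} (h1 : (1 : F) ∈ E) :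
    (1 : Ω) ∈ im ev E :=
  ⟨1 ⊗ₜ 1, Submodule.tmul_mem_baseChange_of_mem _ h1, by
    simp [← Algebra.TensorProduct.one_def]⟩

theorem finrank_mulℓ (h : GenericSection W ev ℓ) (E : Submodule k F) :
    Module.finrank K (mulℓ K ℓ E) = Module.finrank k E := by
  rw [← bc_finrank K E]
  refine (Submodule.equivMapOfInjective (LinearMap.mulLeft K ℓ) ?_ _).finrank_eq.symm
  rw [← LinearMap.ker_eq_bot, LinearMap.ker_eq_bot']
  exact fun m hm => h.regular m hm

theorem mulℓ_le (h : GenericSection W ev ℓ) {E E' : Submodule k F} (hE : W * E ≤ E') :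
    mulℓ K ℓ E ≤ E'.baseChange K ⊓ LinearMap.ker ev.toLinearMap := by
  rintro _ ⟨ζ, hζ, rfl⟩
  refine ⟨Submodule.baseChange_mono K hE ?_, ?_⟩
  · rw [bc_mul]; exact Submodule.mul_mem_mul h.mem hζ
  · simp [h.ev_eq_zero]

/-- Restricting to the section drops the dimension at least by that of the multiples of `ℓ`. -/
theorem finrank_im_le (h : GenericSection W ev ℓ) {E E' : Submodule k F} (hE' : E'.FG)
    (hE : W * E ≤ E') :
    Module.finrank K (im ev E') + Module.finrank k E ≤ Module.finrank k E' := by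
  have hfg := (bc_fg_iff K E').2 hE'
  have h1 := finrank_map_add_finrank_inf_ker ev.toLinearMap (E'.baseChange K) hfg
  have : FiniteDimensional K (E'.baseChange K) := Module.Finite.iff_fg.2 hfg
  have : FiniteDimensional K ↥(E'.baseChange K ⊓ LinearMap.ker ev.toLinearMap) :=
    Submodule.finiteDimensional_of_le inf_le_left
  have h2 := Submodule.finrank_mono (h.mulℓ_le hE)
  rw [h.finrank_mulℓ] at h2
  rw [bc_finrank] at h1
  change Module.finrank K (im ev E') + _ = _ at h1
  omega

/-- Equality in `finrank_im_le` means that on `E'` restriction to the section kills only the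
multiples of `ℓ` by `E`. -/
theorem finrank_im_eq_iff (h : GenericSection W ev ℓ) {E E' : Submodule k F} (hE' : E'.FG)
    (hE : W * E ≤ E') :
    Module.finrank K (im ev E') + Module.finrank k E = Module.finrank k E' ↔
      E'.baseChange K ⊓ LinearMap.ker ev.toLinearMap ≤ mulℓ K ℓ E := by
  have hfg := (bc_fg_iff K E').2 hE'
  have h1 := finrank_map_add_finrank_inf_ker ev.toLinearMap (E'.baseChange K) hfg
  have : FiniteDimensional K (E'.baseChange K) := Module.Finite.iff_fg.2 hfg
  have : FiniteDimensional K ↥(E'.baseChange K ⊓ LinearMap.ker ev.toLinearMap) :=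
    Submodule.finiteDimensional_of_le inf_le_left
  have h2 := h.mulℓ_le hE
  rw [bc_finrank] at h1
  change Module.finrank K (im ev E') + _ = _ at h1
  constructor
  · intro h3
    refine (Submodule.eq_of_le_of_finrank_le h2 ?_).ge
    rw [h.finrank_mulℓ]
    omega
  · intro h3
    have := congrArg (fun S : Submodule K (K ⊗[k] F) => Module.finrank K S)
      (le_antisymm h2 h3)
    simp only [h.finrank_mulℓ] at this
    omega

theorem W_fg_pow [FiniteDimensional k W] (i : ℕ) : (W ^ i).FG :=
  (Module.Finite.iff_fg.1 ‹FiniteDimensional k W›).pow i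

/-- The powers of the image of `W` exhaust `Ω`, because their dimensions are bounded by the
increments of the (eventually linear) dimensions of the powers of `W`. -/
theorem exists_im_pow_eq_top (h : GenericSection W ev ℓ) [FiniteDimensional k W]
    (h1 : (1 : F) ∈ W) {s p : ℤ} {N : ℕ}
    (hw : ∀ t : ℕ, N ≤ t → (Module.finrank k ↥(W ^ t) : ℤ) = s * t + 1 - p) :
    ∃ n : ℕ, im ev (W ^ n) = ⊤ ∧ FiniteDimensional K Ω := by
  have hfgV : ∀ i, FiniteDimensional K (im ev (W ^ i)) := fun i =>
    Module.Finite.iff_fg.2 (((bc_fg_iff K _).2 (W_fg_pow i)).map _)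
  have hmono : Monotone fun i : ℕ => im ev (W ^ i) := fun i j hij =>
    im_mono ev (pow_mono_of_one_mem h1 hij)
  have hbd : ∀ i, (Module.finrank K (im ev (W ^ i)) : ℤ) ≤ s := by
    intro i
    have h2 := h.finrank_im_le (W_fg_pow (i + N + 1)) (pow_succ' W (i + N)).ge
    have h3 := Submodule.finrank_mono (hmono (show i ≤ i + N + 1 by omega))
    have h4 := hw (i + N) (by omega)
    have h5 := hw (i + N + 1) (by omega)
    push_cast at h4 h5
    zify at h2 h3
    linarith
  have hstab : ∃ n, 1 ≤ n ∧ im ev (W ^ n) = im ev (W ^ (n + 1)) := by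
    by_contra hcon
    push Not at hcon
    have hgrow : ∀ n : ℕ, n ≤ Module.finrank K (im ev (W ^ (n + 1))) := by
      intro n
      induction n with
      | zero => exact Nat.zero_le _
      | succ n ih =>
        have := Submodule.finrank_lt_finrank_of_lt
          (lt_of_le_of_ne (hmono (Nat.le_succ (n + 1))) (hcon (n + 1) (by omega)))
        exact lt_of_le_of_lt ih this
    have h2 := hbd (s.toNat + 1 + 1)
    have h3 := hgrow (s.toNat + 1)
    have := Int.self_le_toNat s
    omega
  obtain ⟨n, hn, hst⟩ := hstab
  have hall : ∀ m, im ev (W ^ (n + m)) = im ev (W ^ n) := by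
    intro m
    induction m with
    | zero => rfl
    | succ m ih => rw [← add_assoc, pow_succ, im_mul, ih, ← im_mul, ← pow_succ, ← hst]
  have h1n : (1 : F) ∈ W ^ n := Submodule.one_le.1 (one_le_pow₀ (Submodule.one_le.2 h1))
  let S : Subalgebra K Ω := Submodule.toSubalgebra (im ev (W ^ n)) (one_mem_im ev h1n) (by
    intro x y hx hy
    have := Submodule.mul_mem_mul hx hy
    rwa [← im_mul, ← pow_add, hall] at this)
  have hS : Subalgebra.toSubmodule S = im ev (W ^ n) := rfl
  have hStop := h.generate S (hfgV n) (fun f hf => by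
    refine hmono hn ?_
    exact ⟨_, Submodule.tmul_mem_baseChange_of_mem _ (by simpa using hf), rfl⟩)
  have htop : im ev (W ^ n) = ⊤ := by rw [← hS, hStop]; rfl
  refine ⟨n, htop, ?_⟩
  have := hfgV n
  rw [htop] at this
  exact Module.finite_def.2 (Module.Finite.iff_fg.1 this)

theorem satB_ker (h : GenericSection W ev ℓ) (i : ℕ) :
    (satB W (i + 1)).baseChange K ⊓ LinearMap.ker ev.toLinearMap ≤ mulℓ K ℓ (satB W i) := by
  rintro ζ ⟨hζ, hev⟩
  obtain ⟨ζ', hζ', rfl⟩ := h.ker i ζ hζ hev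
  exact ⟨ζ', hζ', rfl⟩

theorem W_mul_satB (W : Submodule k F) (i : ℕ) : W * satB W i ≤ satB W (i + 1) := by
  have := mul_satB_le W 1 i
  rwa [pow_one, add_comm] at this

theorem satB_fg [IsAlgClosed k] (h : GenericSection W ev ℓ) [FiniteDimensional k W]
    (h1 : (1 : F) ∈ W)
    [FiniteDimensional K Ω] (i : ℕ) : (satB W i).FG := by
  induction i with
  | zero =>
    rw [satB_zero W h1, Submodule.one_eq_span]
    exact Submodule.fg_span_singleton _
  | succ i ih =>
    rw [← bc_fg_iff K]
    refine Submodule.fg_of_fg_map_of_fg_inf_ker ev.toLinearMap (IsNoetherian.noetherian _) ?_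
    have : FiniteDimensional K ((mulℓ K ℓ (satB W i))) :=
      Module.Finite.iff_fg.2 (((bc_fg_iff K _).2 ih).map _)
    have := Submodule.finiteDimensional_of_le (h.satB_ker i)
    exact Module.Finite.iff_fg.1 this

theorem finrank_satB_succ [IsAlgClosed k] (h : GenericSection W ev ℓ) [FiniteDimensional k W]
    (h1 : (1 : F) ∈ W)
    [FiniteDimensional K Ω] (i : ℕ) :
    Module.finrank K (im ev (satB W (i + 1))) + Module.finrank k (satB W i) =
      Module.finrank k (satB W (i + 1)) :=
  (h.finrank_im_eq_iff (h.satB_fg h1 _) (W_mul_satB W i)).2 (h.satB_ker i)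

/-- In large degrees there is nothing to saturate. -/
theorem exists_satB_eq_pow [IsAlgClosed k] (h : GenericSection W ev ℓ) [FiniteDimensional k W]
    (h1 : (1 : F) ∈ W) [FiniteDimensional K Ω] {n : ℕ} (hn : im ev (W ^ n) = ⊤) :
    ∃ N, ∀ i, N ≤ i → satB W i = W ^ i := by
  have hstep : ∀ i, n ≤ i → W * satB W i = satB W (i + 1) := by
    intro i hi
    refine eq_of_bc_le K (h.satB_fg h1 _) ?_ (W_mul_satB W i) ?_
    · exact (Module.Finite.iff_fg.1 ‹FiniteDimensional k W›).mul (h.satB_fg h1 _)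
    · intro ζ hζ
      have : ev ζ ∈ im ev (W ^ n) := by rw [hn]; trivial
      obtain ⟨η, hη, hηζ⟩ := this
      have hle : W ^ n ≤ W * satB W i := by
        calc W ^ n ≤ W ^ (i + 1) := pow_mono_of_one_mem h1 (by omega)
          _ = W * W ^ i := pow_succ' W i
          _ ≤ W * satB W i := mul_le_mul' le_rfl (pow_le_satB W i)
      have hη' := Submodule.baseChange_mono K hle hη
      have hη'' := Submodule.baseChange_mono K (W_mul_satB W i) hη'
      obtain ⟨ζ', hζ', he⟩ := h.ker i (ζ - η) (Submodule.sub_mem _ hζ hη'') (by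
        have : ev η = ev ζ := hηζ
        rw [map_sub, this, sub_self])
      have : ζ = ℓ * ζ' + η := by rw [← he]; ring
      rw [this]
      refine Submodule.add_mem _ ?_ hη'
      rw [bc_mul]
      exact Submodule.mul_mem_mul h.mem hζ'
  have hall : ∀ m, satB W (n + m) = W ^ m * satB W n := by
    intro m
    induction m with
    | zero => simp
    | succ m ih => rw [← add_assoc, ← hstep _ (by omega), ih, pow_succ', mul_assoc]
  -- a common exponent for the finitely many generators of `satB W n`
  have hj : ∃ j, satB W n ≤ W ^ (j + n) / W ^ j := by
    obtain ⟨S, hS⟩ := h.satB_fg h1 n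
    have : ∀ f ∈ S, ∃ j, f ∈ W ^ (j + n) / W ^ j := by
      intro f hf
      have hf' : f ∈ satB W n := by rw [← hS]; exact Submodule.subset_span hf
      simpa only [Submodule.mem_div_iff_forall_mul_mem] using mem_satB.1 hf'
    choose! j hj using this
    refine ⟨S.sup j, ?_⟩
    rw [← hS, Submodule.span_le]
    intro f hf
    exact satB_step_mono W n (Finset.le_sup hf) (hj f hf)
  obtain ⟨j, hj⟩ := hj
  refine ⟨j + n, fun i hi => le_antisymm ?_ (pow_le_satB W i)⟩
  obtain ⟨m, rfl⟩ := Nat.exists_eq_add_of_le hi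
  rw [show j + n + m = n + (m + j) by ring, hall, pow_add, mul_assoc,
    show n + (m + j) = m + (j + n) by ring, pow_add]
  refine mul_le_mul' le_rfl ?_
  rw [mul_comm]
  exact Submodule.le_div_iff_mul_le.1 hj

end GenericSection

end

/-! ### Growth estimates from a generic section -/

section

open TensorProduct

namespace GenericSection

variable {k K F Ω : Type*} [Field k] [Field K] [Field F] [Field Ω]
    [Algebra k K] [Algebra k F] [Algebra K Ω] {W : Submodule k F}
    {ev : K ⊗[k] F →ₐ[K] Ω} {ℓ : K ⊗[k] F}

theorem finrank_im_W [IsAlgClosed k] (h : GenericSection W ev ℓ) [FiniteDimensional k W]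
    (h1 : (1 : F) ∈ W) : Module.finrank K (im ev W) + 1 = Module.finrank k W := by
  have h0 := satB_zero W h1
  have hfr : Module.finrank k ↥(1 : Submodule k F) = 1 := by
    rw [Submodule.one_eq_span]; exact finrank_span_singleton one_ne_zero
  have := (h.finrank_im_eq_iff (E := 1) (E' := W) (by simpa using W_fg_pow (W := W) 1)
    (by simp)).2 (by
      have h2 := h.satB_ker 0
      rw [h0] at h2
      refine le_trans (inf_le_inf_right _ (Submodule.baseChange_mono K ?_)) h2
      have := pow_le_satB W 1
      rwa [pow_one] at this)
  rw [hfr] at this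
  exact this

/-- If the square of a subspace of dimension more than half of `[Ω : K]` were not everything, it
would be killed by a functional `τ`, and the subspace would be isotropic for the nondegenerate
form `τ (x y)`. -/
theorem sq_eq_top [FiniteDimensional K Ω] (V : Submodule K Ω)
    (hV : Module.finrank K Ω < 2 * Module.finrank K V) : V * V = ⊤ := by
  by_contra hne
  obtain ⟨τ, hτ, hle⟩ := Submodule.exists_le_ker_of_lt_top _ (lt_top_iff_ne_top.2 hne)
  have := finrank_perp τ hτ V V fun u hu v hv => hle (Submodule.mul_mem_mul hu hv)
  omega

/-- A functional `χ` on products `x ζ` that only depends on `ev ζ` is represented, through the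
duality `τ`, by a linear map `x ↦ D x`. -/
theorem exists_functional [FiniteDimensional K Ω] (τ : Ω →ₗ[K] K) (hτ : τ ≠ 0)
    {P Q : Submodule K (K ⊗[k] F)} (hsurj : Q.map ev.toLinearMap = ⊤)
    (χ : K ⊗[k] F →ₗ[K] K)
    (hχ : ∀ x ∈ P, ∀ ζ ∈ Q, ev ζ = 0 → χ (x * ζ) = 0) :
    ∃ D : K ⊗[k] F →ₗ[K] Ω, ∀ x ∈ P, ∀ ζ ∈ Q, χ (x * ζ) = τ (D x * ev ζ) := by
  obtain ⟨σ, hσ⟩ := LinearMap.exists_rightInverse_of_surjective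
    (ev.toLinearMap.domRestrict Q) (by rw [LinearMap.range_domRestrict, hsurj])
  have hσ' : ∀ ω, ev (σ ω : K ⊗[k] F) = ω := fun ω => LinearMap.congr_fun hσ ω
  let T := (mulForm τ).toDual (mulForm_nondeg τ hτ)
  let G : K ⊗[k] F →ₗ[K] Module.Dual K Ω :=
    { toFun := fun x => χ ∘ₗ LinearMap.mulLeft K x ∘ₗ Q.subtype ∘ₗ σ
      map_add' := fun x y => by ext; simp [add_mul]
      map_smul' := fun c x => by ext; simp }
  refine ⟨T.symm.toLinearMap ∘ₗ G, fun x hx ζ hζ => ?_⟩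
  have h1 : τ (T.symm (G x) * ev ζ) = G x (ev ζ) := by
    rw [← mulForm_apply]
    exact LinearMap.BilinForm.apply_toDual_symm_apply _ _
  have h2 := hχ x hx (ζ - σ (ev ζ)) (Q.sub_mem hζ (σ (ev ζ)).2) (by
    rw [map_sub, hσ', sub_self])
  rw [mul_sub, map_sub, sub_eq_zero] at h2
  rw [h2]
  exact h1.symm

/-- If restriction to the section kills only `ℓ Wⁱ` in `Wⁱ⁺¹`, the same holds one degree higher.

A functional `χ` on `Wⁱ⁺²` killing `ℓ Wⁱ⁺¹` is of the form `χ (x z) = τ (D x * ev z)` for `x ∈ W`,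
`z ∈ Wⁱ⁺¹`. Subtracting `x ↦ D 1 * ev x` from `D` gives a map `D'` with `D' 1 = 0` and
`τ (D' x * ev y * ev v)` symmetric in `x, y`. So the image `U` of `D'` is orthogonal to `N V`, where
`V` and `N` are the images in `Ω` of `W` and of the kernel of `D'` on `W`. The Cauchy-Davenport
inequality for `N V` then forces `U = 0`, so that `χ` factors through `ev`. -/
theorem ker_propagate [IsAlgClosed k] (h : GenericSection W ev ℓ) [FiniteDimensional k W]
    (h1 : (1 : F) ∈ W) [FiniteDimensional K Ω]
    (hr : Module.finrank K Ω + 4 ≤ 2 * Module.finrank k W)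
    {i : ℕ} (hi : 1 ≤ i)
    (hE : (W ^ (i + 1)).baseChange K ⊓ LinearMap.ker ev.toLinearMap ≤ mulℓ K ℓ (W ^ i)) :
    (W ^ (i + 2)).baseChange K ⊓ LinearMap.ker ev.toLinearMap ≤ mulℓ K ℓ (W ^ (i + 1)) := by
  have hdV := h.finrank_im_W h1
  set V := im ev W with hVdef
  have hV1 : (1 : Ω) ∈ V := one_mem_im ev h1
  have hVV : V * V = ⊤ := sq_eq_top V (by omega)
  have hsurj : im ev (W ^ (i + 1)) = ⊤ := by
    rw [eq_top_iff, ← hVV, ← im_mul, ← sq]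
    exact im_mono ev (pow_mono_of_one_mem h1 (by omega))
  rintro ζ ⟨hζ, hζ0⟩
  by_contra hnot
  obtain ⟨χ, hχζ, hχ⟩ := Submodule.exists_le_ker_of_notMem hnot
  apply hχζ
  obtain ⟨τ, hτ⟩ : ∃ τ : Ω →ₗ[K] K, τ ≠ 0 := by
    obtain ⟨τ, hτ⟩ := exists_ne (0 : Module.Dual K Ω)
    exact ⟨τ, hτ⟩
  have hχℓ : ∀ z ∈ (W ^ (i + 1)).baseChange K, χ (ℓ * z) = 0 := fun z hz => hχ ⟨z, hz, rfl⟩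
  have hWi : ∀ j, ∀ x ∈ W.baseChange K, ∀ z ∈ (W ^ j).baseChange K,
      x * z ∈ (W ^ (j + 1)).baseChange K := by
    intro j x hx z hz
    rw [pow_succ', bc_mul]; exact Submodule.mul_mem_mul hx hz
  obtain ⟨D, hD⟩ := exists_functional (ev := ev) τ hτ hsurj (P := W.baseChange K) χ (by
    intro x hx z hz hz0
    obtain ⟨z', hz', rfl⟩ := hE ⟨hz, hz0⟩
    have : x * (ℓ * z') = ℓ * (x * z') := by ring
    simp only [LinearMap.mulLeft_apply, this]
    exact hχℓ _ (hWi _ x hx z' hz'))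
  have h1K : (1 : K ⊗[k] F) ∈ W.baseChange K := Submodule.tmul_mem_baseChange_of_mem _ h1
  -- normalize `D` to vanish at `1`
  let D' : K ⊗[k] F →ₗ[K] Ω := D - LinearMap.mulLeft K (D 1) ∘ₗ ev.toLinearMap
  have hD' : ∀ x, D' x = D x - D 1 * ev x := fun x => rfl
  have hD'1 : D' 1 = 0 := by simp [hD']
  have hcoc : ∀ x ∈ W.baseChange K, ∀ y ∈ W.baseChange K, ∀ v ∈ W.baseChange K,
      τ (D' x * (ev y * ev v)) = τ (D' y * (ev x * ev v)) := by
    intro x hx y hy v hv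
    have hv' : v ∈ (W ^ i).baseChange K :=
      Submodule.baseChange_mono K (by simpa using pow_mono_of_one_mem h1 hi) hv
    have e1 := hD x hx (y * v) (hWi _ y hy v hv')
    have e2 := hD y hy (x * v) (hWi _ x hx v hv')
    have e3 : x * (y * v) = y * (x * v) := by ring
    rw [e3, e2, map_mul ev, map_mul ev] at e1
    have e4 : D' x * (ev y * ev v) = D x * (ev y * ev v) - D 1 * ev x * ev y * ev v := by
      rw [hD']; ring
    have e5 : D' y * (ev x * ev v) = D y * (ev x * ev v) - D 1 * ev x * ev y * ev v := by
      rw [hD']; ring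
    rw [e4, e5, map_sub, map_sub, e1]
  have hWKfg : (W.baseChange K).FG :=
    (bc_fg_iff K W).2 (Module.Finite.iff_fg.1 ‹FiniteDimensional k W›)
  have hWKfin : FiniteDimensional K (W.baseChange K) := Module.Finite.iff_fg.2 hWKfg
  set N' : Submodule K (K ⊗[k] F) := W.baseChange K ⊓ LinearMap.ker D' with hN'
  have hN'fg : N'.FG := by
    have : FiniteDimensional K N' := Submodule.finiteDimensional_of_le inf_le_left
    exact Module.Finite.iff_fg.1 this
  set N : Submodule K Ω := N'.map ev.toLinearMap with hN
  set U : Submodule K Ω := (W.baseChange K).map D' with hU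
  have hperp : ∀ u ∈ U, ∀ y ∈ N * V, τ (u * y) = 0 := by
    rintro _ ⟨x, hx, rfl⟩ y hy
    have : N * V ≤ LinearMap.ker (τ ∘ₗ LinearMap.mulLeft K (D' x)) := by
      rw [Submodule.mul_le]
      rintro _ ⟨n, ⟨hn, hn0⟩, rfl⟩ _ ⟨v, hv, rfl⟩
      have h2 := hcoc x hx n hn v hv
      have hn0' : D' n = 0 := hn0
      rw [hn0', zero_mul, map_zero] at h2
      exact h2
    exact this hy
  have dUN := finrank_map_add_finrank_inf_ker D' (W.baseChange K) hWKfg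
  rw [bc_finrank, ← hU, ← hN'] at dUN
  have dN := finrank_map_add_finrank_inf_ker ev.toLinearMap N' hN'fg
  rw [← hN] at dN
  -- the kernel of `ev` on `N'` is at most the line spanned by `ℓ`
  have dker : Module.finrank K ↥(N' ⊓ LinearMap.ker ev.toLinearMap) ≤ 1 := by
    have e1 := finrank_map_add_finrank_inf_ker ev.toLinearMap (W.baseChange K) hWKfg
    rw [bc_finrank] at e1
    change Module.finrank K V + _ = _ at e1
    have : FiniteDimensional K ↥(W.baseChange K ⊓ LinearMap.ker ev.toLinearMap) :=
      Submodule.finiteDimensional_of_le inf_le_left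
    have e2 := Submodule.finrank_mono (inf_le_inf_right (LinearMap.ker ev.toLinearMap)
      (show N' ≤ W.baseChange K from inf_le_left))
    omega
  have hNne : N ≠ ⊥ := by
    intro hb
    have : (1 : Ω) ∈ N := ⟨1, ⟨h1K, hD'1⟩, by simp⟩
    rw [hb] at this
    exact one_ne_zero this
  have hVne : V ≠ ⊥ := by
    intro hb
    rw [hb] at hV1
    exact one_ne_zero hV1
  have hU0 : U = ⊥ := by
    have dperp := finrank_perp τ hτ U (N * V) hperp
    rcases linear_cauchy_davenport (h.primitive ‹_›) N V hNne hVne with hc | hc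
    · rw [hc, finrank_top] at dperp
      exact Submodule.finrank_eq_zero.1 (by omega)
    · omega
  have hDx : ∀ x ∈ W.baseChange K, D x = D 1 * ev x := by
    intro x hx
    have : D' x ∈ U := ⟨x, hx, rfl⟩
    rw [hU0, Submodule.mem_bot, hD', sub_eq_zero] at this
    exact this
  have hfin : (W ^ (i + 2)).baseChange K ≤
      LinearMap.ker (χ - τ ∘ₗ LinearMap.mulLeft K (D 1) ∘ₗ ev.toLinearMap) := by
    rw [pow_succ', bc_mul, Submodule.mul_le]
    intro x hx z hz
    rw [LinearMap.mem_ker, LinearMap.sub_apply, hD x hx z hz, hDx x hx]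
    simp [mul_assoc]
  have h2 := hfin hζ
  rw [LinearMap.mem_ker, LinearMap.sub_apply, sub_eq_zero] at h2
  rw [h2]
  have h3 : ev ζ = 0 := hζ0
  simp [h3]

/-- The estimates for a generic section. The image of `W` in `Ω` has dimension more than
`[Ω : K] / 2 = s / 2`, so from degree `2` on restriction to the section is onto, and the saturation
grows by `s` in each step. The powers of `W` grow by at least `s`; if one step is exactly `s`, then
by `ker_propagate` so are all later ones, and the saturation adds nothing. -/
theorem estimates [IsAlgClosed k] (h : GenericSection W ev ℓ) [FiniteDimensional k W]
    (h1 : (1 : F) ∈ W) {s p : ℤ} {N : ℕ}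
    (hw : ∀ t : ℕ, N ≤ t → (Module.finrank k ↥(W ^ t) : ℤ) = s * t + 1 - p)
    (hs : s ≤ 2 * Module.finrank k W - 4) :
    (∀ i, (satB W i).FG) ∧
    (∀ i, 1 ≤ i → (Module.finrank k (satB W i) : ℤ) = s * i + 1 - p) ∧
    ∀ i, 1 ≤ i → (Module.finrank k (satB W (i + 1)) : ℤ) - Module.finrank k ↥(W ^ (i + 1)) ≤
      max 0 ((Module.finrank k (satB W i) : ℤ) - Module.finrank k ↥(W ^ i) - 1) := by
  obtain ⟨n, hn, hfin⟩ := h.exists_im_pow_eq_top h1 hw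
  obtain ⟨N', hN'⟩ := h.exists_satB_eq_pow h1 hn
  have hfg := h.satB_fg h1
  have htopn : ∀ i, n ≤ i → im ev (satB W i) = ⊤ := by
    intro i hi
    rw [eq_top_iff, ← hn]
    exact im_mono ev ((pow_mono_of_one_mem h1 hi).trans (pow_le_satB W i))
  -- in large degrees both Hilbert functions are `s t + 1 - p`, and the section has dimension `[Ω : K]`
  have hdeg : (Module.finrank K Ω : ℤ) = s := by
    have e := h.finrank_satB_succ h1 (n + N + N')
    rw [htopn _ (by omega), hN' _ (by omega), hN' _ (by omega), finrank_top] at e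
    have e1 := hw (n + N + N') (by omega)
    have e2 := hw (n + N + N' + 1) (by omega)
    push_cast at e1 e2
    zify at e
    linarith
  have hdV := h.finrank_im_W h1
  have hVV : im ev W * im ev W = ⊤ := sq_eq_top _ (by omega)
  have htop : ∀ i, 2 ≤ i → im ev (W ^ i) = ⊤ := by
    intro i hi
    rw [eq_top_iff, ← hVV, ← im_mul, ← sq]
    exact im_mono ev (pow_mono_of_one_mem h1 hi)
  have htopB : ∀ i, 2 ≤ i → im ev (satB W i) = ⊤ := by
    intro i hi
    rw [eq_top_iff, ← htop i hi]
    exact im_mono ev (pow_le_satB W i)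
  have hinc : ∀ i, 1 ≤ i → (Module.finrank k (satB W (i + 1)) : ℤ) =
      Module.finrank k (satB W i) + s := by
    intro i hi
    have e := h.finrank_satB_succ h1 i
    rw [htopB _ (by omega), finrank_top] at e
    zify at e
    linarith
  have hb : ∀ i, 1 ≤ i → (Module.finrank k (satB W i) : ℤ) = s * i + 1 - p := by
    intro i hi
    have hlin : ∀ m : ℕ, (Module.finrank k (satB W (i + m)) : ℤ) =
        Module.finrank k (satB W i) + s * m := by
      intro m
      induction m with
      | zero => simp
      | succ m ih =>
        rw [← add_assoc, hinc _ (by omega), ih]; push_cast; ring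
    have e := hlin (N + N')
    rw [hN' _ (by omega), hw _ (by omega)] at e
    push_cast at e
    linarith
  refine ⟨hfg, hb, fun i hi => ?_⟩
  have hdrop : ∀ i, 1 ≤ i →
      Module.finrank K Ω + Module.finrank k ↥(W ^ i) ≤ Module.finrank k ↥(W ^ (i + 1)) := by
    intro i hi
    have := h.finrank_im_le (W_fg_pow (i + 1)) (pow_succ' W i).ge
    rwa [htop _ (by omega), finrank_top] at this
  have hiff : ∀ i, 1 ≤ i →
      (Module.finrank K Ω + Module.finrank k ↥(W ^ i) = Module.finrank k ↥(W ^ (i + 1)) ↔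
      (W ^ (i + 1)).baseChange K ⊓ LinearMap.ker ev.toLinearMap ≤ mulℓ K ℓ (W ^ i)) := by
    intro i hi
    have := h.finrank_im_eq_iff (W_fg_pow (i + 1)) (pow_succ' W i).ge
    rwa [htop _ (by omega), finrank_top] at this
  by_cases hE : (W ^ (i + 1)).baseChange K ⊓ LinearMap.ker ev.toLinearMap ≤ mulℓ K ℓ (W ^ i)
  · have hEall : ∀ m, (W ^ (i + m + 1)).baseChange K ⊓ LinearMap.ker ev.toLinearMap ≤
        mulℓ K ℓ (W ^ (i + m)) := by
      intro m
      induction m with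
      | zero => exact hE
      | succ m ih => exact h.ker_propagate (i := i + m) h1 (by omega) (by omega) ih
    have hlin : ∀ m : ℕ, (Module.finrank k ↥(W ^ (i + m)) : ℤ) =
        Module.finrank k ↥(W ^ i) + s * m := by
      intro m
      induction m with
      | zero => simp
      | succ m ih =>
        have := (hiff (i + m) (by omega)).2 (hEall m)
        zify at this
        rw [← add_assoc, ← this, ih, hdeg]; push_cast; ring
    have e := hlin N
    rw [hw _ (by omega)] at e
    have e1 := hlin 1
    have e2 := hb (i + 1) (by omega)
    push_cast at e e1 e2
    apply le_max_of_le_left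
    linarith
  · have hlt := lt_of_le_of_ne (hdrop i hi) (fun e => hE ((hiff i hi).1 e))
    have := hinc i hi
    apply le_max_of_le_right
    zify at hlt
    linarith

end GenericSection

end

/-! ### Geometric irreducibility over an algebraically closed field -/

section

open TensorProduct Polynomial

section Specialization

variable {k : Type*} [Field k] [IsAlgClosed k]

/-- A form of the Nullstellensatz. -/
theorem exists_algHom_ne_zero {A : Type*} [CommRing A] [IsDomain A] [Algebra k A]
    [Algebra.FiniteType k A] (c : A) (hc : c ≠ 0) : ∃ φ : A →ₐ[k] k, φ c ≠ 0 := by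
  let L := Localization.Away c
  have : Nontrivial L := by
    have : IsDomain L := IsLocalization.isDomain_localization
      (powers_le_nonZeroDivisors_of_noZeroDivisors hc)
    infer_instance
  have hL : Algebra.FiniteType k L :=
    Algebra.FiniteType.trans (S := A) inferInstance (IsLocalization.finiteType_of_monoid_fg
      (Submonoid.powers c) L)
  obtain ⟨m, hm⟩ := Ideal.exists_maximal L
  let Q := L ⧸ m
  let _ : Field Q := Ideal.Quotient.field m
  have : Algebra.FiniteType k Q := Algebra.FiniteType.of_surjective
    (Ideal.Quotient.mkₐ k m) (Ideal.Quotient.mkₐ_surjective k m)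
  have : Module.Finite k Q := finite_of_finite_type_of_isJacobsonRing k Q
  have hbij := IsAlgClosed.algebraMap_bijective_of_isIntegral (k := k) (K := Q)
  let e : k ≃ₐ[k] Q := AlgEquiv.ofBijective (Algebra.ofId k Q) hbij
  let ψ : A →ₐ[k] Q := (Ideal.Quotient.mkₐ k m).comp (IsScalarTower.toAlgHom k A L)
  refine ⟨(e.symm : Q →ₐ[k] k).comp ψ, fun h => ?_⟩
  have h1 : ψ c = 0 := by
    have : e.symm (ψ c) = 0 := h
    simpa using this
  have hu : IsUnit (ψ c) :=
    (IsLocalization.Away.algebraMap_isUnit (S := L) c).map (Ideal.Quotient.mkₐ k m)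
  exact hu.ne_zero h1

/-- A product of nonzero tensors stays nonzero: the coefficients involved lie in a finitely
generated algebra, which has a `k`-point where chosen nonzero coefficients do not vanish. -/
theorem isDomain_tensorProduct {A B : Type*} [Field A] [Algebra k A] [Field B]
    [Algebra k B] : NoZeroDivisors (A ⊗[k] B) := by
  refine ⟨fun {x y} hxy => ?_⟩
  by_contra hcon
  push Not at hcon
  obtain ⟨hx, hy⟩ := hcon
  let b := Module.Basis.ofVectorSpace k B
  let bA := Algebra.TensorProduct.basis A b
  obtain ⟨i, hi⟩ : ∃ i, bA.repr x i ≠ 0 := by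
    by_contra h; push Not at h
    exact hx (bA.repr.map_eq_zero_iff.1 (Finsupp.ext h))
  obtain ⟨j, hj⟩ : ∃ j, bA.repr y j ≠ 0 := by
    by_contra h; push Not at h
    exact hy (bA.repr.map_eq_zero_iff.1 (Finsupp.ext h))
  let S : Set A := (bA.repr x).frange ∪ (bA.repr y).frange
  have hS : S.Finite := (Finset.finite_toSet _).union (Finset.finite_toSet _)
  let A0 := Algebra.adjoin k S
  have : Algebra.FiniteType k A0 :=
    (Subalgebra.fg_iff_finiteType A0).1 (Subalgebra.fg_def.2 ⟨S, hS, rfl⟩)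
  have hmem : ∀ f : (Module.Basis.ofVectorSpaceIndex k B) →₀ A, (f.frange : Set A) ⊆ S →
      ∀ l, f l ∈ A0 := by
    intro f hf l
    by_cases hl : f l = 0
    · rw [hl]; exact A0.zero_mem
    · exact Algebra.subset_adjoin (hf (Finsupp.mem_frange.2 ⟨hl, l, rfl⟩))
  let inc : A0 ⊗[k] B →ₐ[k] A ⊗[k] B := Algebra.TensorProduct.map A0.val (AlgHom.id k B)
  have hinc : Function.Injective inc :=
    Module.Flat.rTensor_preserves_injective_linearMap (M := B) A0.val.toLinearMap
      Subtype.val_injective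
  have lift : ∀ z : A ⊗[k] B, ((bA.repr z).frange : Set A) ⊆ S →
      ∃ (z0 : A0 ⊗[k] B) (c : Module.Basis.ofVectorSpaceIndex k B → A0), inc z0 = z ∧
        (∀ l, (c l : A) = bA.repr z l) ∧
        ∀ φ : A0 →ₐ[k] k, ∀ l, b.repr (Algebra.TensorProduct.lift
          ((Algebra.ofId k B).comp φ) (AlgHom.id k B) (fun _ _ => Commute.all _ _) z0) l
            = φ (c l) := by
    intro z hz
    let c : Module.Basis.ofVectorSpaceIndex k B → A0 := fun l => ⟨bA.repr z l, hmem _ hz l⟩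
    refine ⟨∑ l ∈ (bA.repr z).support, c l ⊗ₜ b l, c, ?_, fun l => rfl, fun φ l => ?_⟩
    · rw [map_sum]
      conv_rhs => rw [← bA.linearCombination_repr z, Finsupp.linearCombination_apply,
        Finsupp.sum]
      refine Finset.sum_congr rfl fun l _ => ?_
      simp [inc, c, bA, TensorProduct.smul_tmul']
    · have hc : ∀ l, l ∉ (bA.repr z).support → φ (c l) = 0 := by
        intro l hl
        have : c l = 0 := Subtype.ext (Finsupp.notMem_support_iff.1 hl)
        rw [this, map_zero]
      rw [map_sum]
      have h2 : ∀ m, (Algebra.TensorProduct.lift ((Algebra.ofId k B).comp φ) (AlgHom.id k B)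
          (fun _ _ => Commute.all _ _)) (c m ⊗ₜ[k] b m) = φ (c m) • b m := by
        intro m
        simp [Algebra.ofId_apply, Algebra.smul_def]
      simp only [h2, map_sum, map_smul, Finsupp.coe_finsetSum, Finset.sum_apply,
        Module.Basis.repr_self, Finsupp.coe_smul, Pi.smul_apply, smul_eq_mul]
      by_cases hl : l ∈ (bA.repr z).support
      · rw [Finset.sum_eq_single l]
        · simp
        · intro m _ hml
          simp [hml]
        · exact fun h => absurd hl h
      · rw [hc l hl]
        refine Finset.sum_eq_zero fun m hm => ?_
        have : m ≠ l := fun h => hl (h ▸ hm)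
        simp [this]
  obtain ⟨x0, cx, hx0, hcx, hφx⟩ := lift x Set.subset_union_left
  obtain ⟨y0, cy, hy0, hcy, hφy⟩ := lift y Set.subset_union_right
  have hxy0 : x0 * y0 = 0 := hinc (by rw [map_mul, hx0, hy0, hxy, map_zero])
  have hc : cx i * cy j ≠ 0 := by
    refine mul_ne_zero (fun h => hi ?_) (fun h => hj ?_)
    · rw [← hcx, h]; rfl
    · rw [← hcy, h]; rfl
  obtain ⟨φ, hφ⟩ := exists_algHom_ne_zero (k := k) _ hc
  rw [map_mul] at hφ
  have h := congrArg (Algebra.TensorProduct.lift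
          ((Algebra.ofId k B).comp φ) (AlgHom.id k B) (fun _ _ => Commute.all _ _)) hxy0
  rw [map_mul, map_zero, mul_eq_zero] at h
  rcases h with h | h
  · have := hφx φ i
    rw [h, map_zero] at this
    exact hφ (by rw [← this]; simp)
  · have := hφy φ j
    rw [h, map_zero] at this
    exact hφ (by rw [← this]; simp)

/-- A bivariate polynomial is a unit exactly when it is a nonzero constant. -/
theorem isUnit_bivariate_iff {F : Type*} [Field F] {P : F[X][X]} :
    IsUnit P ↔ P ≠ 0 ∧ ∀ i j, (i, j) ≠ (0, 0) → (P.coeff j).coeff i = 0 := by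
  constructor
  · intro h
    refine ⟨h.ne_zero, fun i j hij => ?_⟩
    obtain ⟨r, hr, rfl⟩ := Polynomial.isUnit_iff.1 h
    obtain ⟨c, hc, rfl⟩ := Polynomial.isUnit_iff.1 hr
    rcases Nat.eq_zero_or_pos j with rfl | hj
    · have hi : i ≠ 0 := fun h => hij (by rw [h])
      rw [coeff_C_zero, coeff_C_of_ne_zero hi]
    · rw [coeff_C_of_ne_zero hj.ne', coeff_zero]
  · rintro ⟨h0, h⟩
    have hP : P = C (C ((P.coeff 0).coeff 0)) := by
      ext j i
      by_cases hij : (i, j) = (0, 0)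
      · obtain ⟨rfl, rfl⟩ := Prod.mk.inj hij
        simp
      · rw [h i j hij]
        rcases Nat.eq_zero_or_pos j with rfl | hj
        · have hi : i ≠ 0 := fun h => hij (by rw [h])
          rw [coeff_C_zero, coeff_C_of_ne_zero hi]
        · rw [coeff_C_of_ne_zero hj.ne', coeff_zero]
    have hc : (P.coeff 0).coeff 0 ≠ 0 := fun hc => h0 (by rw [hP, hc]; simp)
    rw [hP]
    exact (hc.isUnit.map C).map C

theorem mem_range_map_bivariate {A F : Type*} [CommRing A] [Field F] (f : A →+* F)
    (P : F[X][X]) (h : ∀ i j, (P.coeff j).coeff i ∈ f.range) :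
    ∃ P0 : A[X][X], P0.map (mapRingHom f) = P := by
  have h1 : ∀ j, ∃ p : A[X], p.map f = P.coeff j := by
    intro j
    have : P.coeff j ∈ Polynomial.lifts f := by
      rw [Polynomial.lifts_iff_coeff_lifts]
      exact fun i => h i j
    exact (Polynomial.mem_lifts _).1 this
  have : P ∈ Polynomial.lifts (mapRingHom f) := by
    rw [Polynomial.lifts_iff_coeff_lifts]
    intro j
    obtain ⟨p, hp⟩ := h1 j
    exact ⟨p, hp⟩
  exact (Polynomial.mem_lifts _).1 this

/-- Over an algebraically closed field irreducible bivariate polynomials are geometrically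
irreducible: a factorization over `F` specializes to one over `k`. -/
theorem irreducible_map_bivariate {F : Type*} [Field F] [Algebra k F] {G : k[X][X]}
    (hG : Irreducible G) : Irreducible (G.map (mapRingHom (algebraMap k F))) := by
  classical
  have hinj : Function.Injective (Polynomial.map (mapRingHom (algebraMap k F))) :=
    map_injective _ (map_injective _ (algebraMap k F).injective)
  have hG0 : G.map (mapRingHom (algebraMap k F)) ≠ 0 := fun h =>
    hG.ne_zero (hinj (by rw [h, Polynomial.map_zero]))
  refine ⟨fun hu => hG.not_isUnit ?_, fun P Q hPQ => ?_⟩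
  · rw [isUnit_bivariate_iff] at hu ⊢
    refine ⟨hG.ne_zero, fun i j hij => ?_⟩
    have := hu.2 i j hij
    simpa using this
  by_contra hcon
  push Not at hcon
  obtain ⟨hP, hQ⟩ := hcon
  have hP0 : P ≠ 0 := by rintro rfl; exact hG0 (by rw [hPQ, zero_mul])
  have hQ0 : Q ≠ 0 := by rintro rfl; exact hG0 (by rw [hPQ, mul_zero])
  rw [isUnit_bivariate_iff] at hP hQ
  push Not at hP hQ
  obtain ⟨i, j, hij, hp⟩ := hP hP0
  obtain ⟨i', j', hij', hq⟩ := hQ hQ0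
  have cfin : ∀ P : F[X][X], (Set.range fun ij : ℕ × ℕ => (P.coeff ij.2).coeff ij.1).Finite := by
    intro P
    refine Set.Finite.subset (((P.support.biUnion fun j => (P.coeff j).support.image
      fun i => (P.coeff j).coeff i) ∪ {0} : Finset F).finite_toSet) ?_
    rintro _ ⟨⟨i, j⟩, rfl⟩
    by_cases h : (P.coeff j).coeff i = 0
    · simp [h]
    · have hj : P.coeff j ≠ 0 := fun hj => h (by rw [hj, coeff_zero])
      simp only [Finset.coe_union, Set.mem_union, Finset.mem_coe, Finset.mem_biUnion,
        Finset.mem_image]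
      exact Or.inl ⟨j, mem_support_iff.2 hj, i, mem_support_iff.2 h, rfl⟩
  -- the finitely generated algebra of all coefficients of the two factors
  let S : Set F := (Set.range fun ij : ℕ × ℕ => (P.coeff ij.2).coeff ij.1) ∪
    (Set.range fun ij : ℕ × ℕ => (Q.coeff ij.2).coeff ij.1)
  let A0 := Algebra.adjoin k S
  have : Algebra.FiniteType k A0 :=
    (Subalgebra.fg_iff_finiteType A0).1 (Subalgebra.fg_def.2 ⟨S, (cfin P).union (cfin Q), rfl⟩)
  let f : A0 →+* F := A0.val
  have hf : Function.Injective f := Subtype.val_injective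
  obtain ⟨P0, hP0'⟩ := mem_range_map_bivariate f P fun i j =>
    ⟨⟨_, Algebra.subset_adjoin (Or.inl ⟨(i, j), rfl⟩)⟩, rfl⟩
  obtain ⟨Q0, hQ0'⟩ := mem_range_map_bivariate f Q fun i j =>
    ⟨⟨_, Algebra.subset_adjoin (Or.inr ⟨(i, j), rfl⟩)⟩, rfl⟩
  have hcomp : f.comp (algebraMap k A0) = algebraMap k F := rfl
  have hPQ0 : G.map (mapRingHom (algebraMap k A0)) = P0 * Q0 := by
    have hinj0 : Function.Injective (Polynomial.map (mapRingHom f)) :=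
      map_injective _ (map_injective _ hf)
    apply hinj0
    rw [Polynomial.map_mul, hP0', hQ0', ← hPQ, Polynomial.map_map, mapRingHom_comp, hcomp]
  have hcP : f ((P0.coeff j).coeff i) = (P.coeff j).coeff i := by
    rw [← hP0']; simp
  have hcQ : f ((Q0.coeff j').coeff i') = (Q.coeff j').coeff i' := by
    rw [← hQ0']; simp
  obtain ⟨φ, hφ⟩ := exists_algHom_ne_zero (k := k)
    ((P0.coeff j).coeff i * (Q0.coeff j').coeff i') (by
      refine mul_ne_zero (fun h => hp ?_) (fun h => hq ?_)
      · rw [← hcP, h, map_zero]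
      · rw [← hcQ, h, map_zero])
  have hid : (φ : A0 →+* k).comp (algebraMap k A0) = RingHom.id k := by
    ext c; simp
  have hfac := congrArg (Polynomial.map (mapRingHom (φ : A0 →+* k))) hPQ0
  rw [Polynomial.map_map, mapRingHom_comp, hid, mapRingHom_id, Polynomial.map_id,
    Polynomial.map_mul] at hfac
  rw [map_mul] at hφ
  rcases hG.isUnit_or_isUnit hfac with h | h
  · have := (isUnit_bivariate_iff.1 h).2 i j hij
    apply left_ne_zero_of_mul hφ
    simpa using this
  · have := (isUnit_bivariate_iff.1 h).2 i' j' hij'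
    apply right_ne_zero_of_mul hφ
    simpa using this

end Specialization

end

/-! ### The shear substitution -/

section

open TensorProduct Polynomial

theorem bivariate_algHom_ext {R A : Type*} [CommRing R] [CommRing A] [Algebra R A]
    {f g : R[X][X] →ₐ[R] A} (h1 : f (C X) = g (C X)) (h2 : f X = g X) : f = g :=
  Polynomial.algHom_ext' (Polynomial.algHom_ext h1) h2

section Shear

variable {F : Type*} [Field F]

/-- The substitution `x ↦ f₁ + u (y - f₂)`, `y ↦ y`. -/
noncomputable def shear (f1 f2 : F) : F[X][X] →ₐ[F] F[X][X] :=
  aevalAeval (R := F) (C (C f1) + C X * (X - C (C f2))) X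

theorem shear_C_X (f1 f2 : F) : shear f1 f2 (C X) = C (C f1) + C X * (X - C (C f2)) := by
  simp [shear]

theorem shear_X (f1 f2 : F) : shear f1 f2 X = X := by
  simp [shear]

theorem shear_C_C (f1 f2 c : F) : shear f1 f2 (C (C c)) = C (C c) := by
  have : (C (C c) : F[X][X]) = algebraMap F _ c := rfl
  rw [this, AlgHom.commutes]

theorem shear_pencil (f1 f2 : F) : shear f1 f2 (X - C (C f2)) = X - C (C f2) := by
  rw [map_sub, shear_X, shear_C_C]

/-- After inverting `y - f₂` the substitution has the inverse `u ↦ (x - f₁) / (y - f₂)`. -/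
theorem shear_injective (f1 f2 : F) : Function.Injective (shear f1 f2) := by
  let Q := FractionRing F[X][X]
  let i : F[X][X] →ₐ[F] Q := IsScalarTower.toAlgHom F F[X][X] Q
  have hi : Function.Injective i := IsFractionRing.injective F[X][X] Q
  have hZ : i (X - C (C f2)) ≠ 0 := by
    rw [Ne, map_eq_zero_iff i hi]
    exact X_sub_C_ne_zero _
  let ρ : F[X][X] →ₐ[F] Q :=
    aevalAeval (R := F) ((i (C X) - i (C (C f1))) / i (X - C (C f2))) (i X)
  have hρX : ρ X = i X := by simp [ρ]
  have hρu : ρ (C X) = (i (C X) - i (C (C f1))) / i (X - C (C f2)) := by simp [ρ]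
  have hρC : ∀ c : F, ρ (C (C c)) = i (C (C c)) := fun c =>
    (ρ.commutes c).trans (i.commutes c).symm
  have : ρ.comp (shear f1 f2) = i := by
    apply bivariate_algHom_ext
    · rw [AlgHom.comp_apply, shear_C_X, map_add, map_mul, map_sub, hρu, hρX, hρC, hρC,
        ← map_sub i X, div_mul_cancel₀ _ hZ]
      ring
    · rw [AlgHom.comp_apply, shear_X, hρX]
  refine Function.Injective.of_comp (f := ρ) ?_
  have h2 : (ρ ∘ shear f1 f2) = i := by rw [← this]; rfl
  rw [h2]; exact hi

/-- Up to powers of `y - f₂`, every polynomial is in the image of the substitution. -/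
theorem shear_homogenize (f1 f2 : F) (a : F[X][X]) :
    ∃ (p : ℕ) (A : F[X][X]), shear f1 f2 A = (X - C (C f2)) ^ p * a := by
  have add : ∀ a b : F[X][X], (∃ (p : ℕ) (A : F[X][X]), shear f1 f2 A = (X - C (C f2)) ^ p * a) →
      (∃ (p : ℕ) (A : F[X][X]), shear f1 f2 A = (X - C (C f2)) ^ p * b) →
      ∃ (p : ℕ) (A : F[X][X]), shear f1 f2 A = (X - C (C f2)) ^ p * (a + b) := by
    rintro a b ⟨p, A, hA⟩ ⟨q, B, hB⟩
    refine ⟨p + q, (X - C (C f2)) ^ q * A + (X - C (C f2)) ^ p * B, ?_⟩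
    rw [map_add, map_mul, map_mul, map_pow, map_pow, shear_pencil, hA, hB]
    ring
  have mul : ∀ a b : F[X][X], (∃ (p : ℕ) (A : F[X][X]), shear f1 f2 A = (X - C (C f2)) ^ p * a) →
      (∃ (p : ℕ) (A : F[X][X]), shear f1 f2 A = (X - C (C f2)) ^ p * b) →
      ∃ (p : ℕ) (A : F[X][X]), shear f1 f2 A = (X - C (C f2)) ^ p * (a * b) := by
    rintro a b ⟨p, A, hA⟩ ⟨q, B, hB⟩
    refine ⟨p + q, A * B, ?_⟩
    rw [map_mul, hA, hB]
    ring
  have hX : ∃ (p : ℕ) (A : F[X][X]), shear f1 f2 A = (X - C (C f2)) ^ p * C X :=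
    ⟨1, C X - C (C f1), by rw [map_sub, shear_C_X, shear_C_C]; ring⟩
  have hC : ∀ a : F[X], ∃ (p : ℕ) (A : F[X][X]), shear f1 f2 A = (X - C (C f2)) ^ p * C a := by
    intro a
    induction a using Polynomial.induction_on with
    | C c => exact ⟨0, C (C c), by rw [shear_C_C]; ring⟩
    | add p q hp hq => rw [C_add]; exact add _ _ hp hq
    | monomial n c ih =>
      rw [pow_succ, ← mul_assoc, C_mul]
      exact mul _ _ ih hX
  induction a using Polynomial.induction_on with
  | C c => exact hC c
  | add p q hp hq => exact add _ _ hp hq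
  | monomial n c ih =>
    rw [pow_succ, ← mul_assoc]
    exact mul _ _ ih ⟨0, X, by rw [shear_X]; ring⟩

/-- A prime polynomial remains prime after the substitution, up to factors supported on
`y = f₂` and factors from `F[u]`. -/
theorem shear_factor (f1 f2 : F) {G : F[X][X]} (hG : Prime G) {d : F[X]}
    {a b : F[X][X]} (h : C d * shear f1 f2 G = a * b) :
    ∃ n : ℕ, a ∣ C d * (X - C (C f2)) ^ n ∨ b ∣ C d * (X - C (C f2)) ^ n := by
  have hinj := shear_injective f1 f2
  have key : ∀ a b A A' : F[X][X], ∀ p, C d * shear f1 f2 G = a * b →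
      shear f1 f2 A = (X - C (C f2)) ^ p * a → A = G * A' → b ∣ C d * (X - C (C f2)) ^ p := by
    intro a b A A' p hab hA hA'
    refine ⟨shear f1 f2 A', ?_⟩
    have hne : shear f1 f2 G ≠ 0 := by
      rw [Ne, map_eq_zero_iff _ hinj]; exact hG.ne_zero
    apply mul_left_cancel₀ hne
    rw [hA', map_mul] at hA
    linear_combination ((X - C (C f2)) ^ p) * hab - b * hA
  obtain ⟨p, A, hA⟩ := shear_homogenize f1 f2 a
  obtain ⟨q, B, hB⟩ := shear_homogenize f1 f2 b
  obtain ⟨m, D, hD⟩ := shear_homogenize f1 f2 (C d)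
  have hdvd : G ∣ (X - C (C f2)) ^ m * (A * B) := by
    refine ⟨D * (X - C (C f2)) ^ (p + q), hinj ?_⟩
    simp only [map_mul, map_pow, shear_pencil, hA, hB, hD]
    linear_combination (-(X - C (C f2)) ^ (m + p + q)) * h
  rcases hG.dvd_or_dvd hdvd with h1 | h1
  · have h2 := hG.dvd_of_dvd_pow h1
    have h3 : shear f1 f2 G ∣ X - C (C f2) := by
      have := map_dvd (shear f1 f2) h2
      rwa [shear_pencil] at this
    have h4 : a ∣ C d * shear f1 f2 G := Dvd.intro b h.symm
    have h5 : C d * shear f1 f2 G ∣ C d * (X - C (C f2)) ^ 1 := by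
      rw [pow_one]; exact mul_dvd_mul_left _ h3
    exact ⟨1, Or.inl (h4.trans h5)⟩
  · rcases hG.dvd_or_dvd h1 with ⟨A', h2⟩ | ⟨B', h2⟩
    · exact ⟨p, Or.inr (key a b A A' p h hA h2)⟩
    · exact ⟨q, Or.inl (key b a B B' q (by rw [h, mul_comm]) hB h2)⟩

end Shear

end

/-! ### Primitivity of the generic member of a pencil -/

section

open TensorProduct Polynomial

theorem bivariate_ringHom_ext {R A : Type*} [CommRing R] [Semiring A]
    {f g : R[X][X] →+* A} (h0 : ∀ c, f (C (C c)) = g (C (C c)))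
    (h1 : f (C X) = g (C X)) (h2 : f X = g X) : f = g :=
  Polynomial.ringHom_ext' (Polynomial.ringHom_ext' (RingHom.ext h0) h1) h2

section Primitive

variable {k F Ω : Type*} [Field k] [Field F] [Field Ω] [Algebra F[X] Ω] [IsFractionRing F[X] Ω]
  [Algebra k Ω]

theorem clear_denominators (a : Polynomial Ω) :
    ∃ (d : F[X]) (a' : F[X][X]), d ≠ 0 ∧
      a'.map (algebraMap F[X] Ω) = C (algebraMap F[X] Ω d) * a := by
  obtain ⟨d, hd, h⟩ := IsLocalization.integerNormalization_spec (nonZeroDivisors F[X]) a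
  refine ⟨d, _, nonZeroDivisors.ne_zero hd, h.trans ?_⟩
  rw [← smul_eq_C_mul]
  exact (algebraMap_smul Ω d a).symm

variable [Algebra F Ω] [IsScalarTower F F[X] Ω]

/-- A factorization of the sheared polynomial over `Ω = F(u)` has a factor which is a power
of `y - f₂`. -/
theorem shear_factor_field (f1 f2 : F) {G : F[X][X]} (hG : Prime G) {a b : Polynomial Ω}
    (h : (shear f1 f2 G).map (algebraMap F[X] Ω) = a * b) :
    ∃ n : ℕ, a ∣ (X - C (algebraMap F Ω f2)) ^ n ∨ b ∣ (X - C (algebraMap F Ω f2)) ^ n := by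
  have hinj : Function.Injective (algebraMap F[X] Ω) := IsFractionRing.injective _ _
  obtain ⟨d, a', hd, ha⟩ := clear_denominators (F := F) a
  obtain ⟨e, b', he, hb⟩ := clear_denominators (F := F) b
  have hu : ∀ {c : F[X]}, c ≠ 0 → IsUnit (C (algebraMap F[X] Ω c) : Polynomial Ω) := fun hc =>
    isUnit_C.2 (isUnit_iff_ne_zero.2 fun h0 => hc (hinj (by rw [h0, map_zero])))
  have hab : C (d * e) * shear f1 f2 G = a' * b' := by
    apply map_injective _ hinj
    rw [Polynomial.map_mul, Polynomial.map_mul, ha, hb, h, map_C, map_mul, C_mul]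
    ring
  have key : ∀ (n : ℕ) (c : F[X]) (x' : F[X][X]) (x : Polynomial Ω), c ≠ 0 →
      x'.map (algebraMap F[X] Ω) = C (algebraMap F[X] Ω c) * x →
      x' ∣ C (d * e) * (X - C (C f2)) ^ n → x ∣ (X - C (algebraMap F Ω f2)) ^ n := by
    intro n c x' x hc hx hdvd
    have h1 := Polynomial.map_dvd (algebraMap F[X] Ω) hdvd
    rw [hx, Polynomial.map_mul, map_C, Polynomial.map_pow, Polynomial.map_sub, map_X, map_C,
      (hu hc).mul_left_dvd, (hu (mul_ne_zero hd he)).dvd_mul_left] at h1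
    rwa [IsScalarTower.algebraMap_apply F F[X] Ω]
  obtain ⟨n, h1 | h1⟩ := shear_factor f1 f2 hG hab
  · exact ⟨n, Or.inl (key n d a' a hd ha h1)⟩
  · exact ⟨n, Or.inr (key n e b' b he hb h1)⟩

variable (k Ω) in
/-- The field `k(u, f₁ - u f₂)` over which the generic member of the pencil lives. -/
noncomputable abbrev sectionField (f1 f2 : F) : IntermediateField k Ω :=
  IntermediateField.adjoin k {algebraMap F[X] Ω X,
    algebraMap F Ω f1 - algebraMap F[X] Ω X * algebraMap F Ω f2}

/-- `Ω` is generated by `F` and `u`. -/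
theorem top_of_algebraMap_mem {f1 f2 : F} (H : IntermediateField (sectionField k Ω f1 f2) Ω)
    (hH : ∀ f : F, algebraMap F Ω f ∈ H) : H = ⊤ := by
  have hu : algebraMap F[X] Ω X ∈ H := H.algebraMap_mem (⟨_, IntermediateField.subset_adjoin k _
    (Set.mem_insert _ _)⟩ : sectionField k Ω f1 f2)
  have hp : ∀ p : F[X], algebraMap F[X] Ω p ∈ H := by
    intro p
    induction p using Polynomial.induction_on with
    | C c =>
      have := hH c
      rwa [IsScalarTower.algebraMap_apply F F[X] Ω] at this
    | add p q hp hq => rw [map_add]; exact add_mem hp hq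
    | monomial n c ih =>
      rw [pow_succ, ← mul_assoc, map_mul]
      exact mul_mem ih hu
  rw [eq_top_iff]
  rintro x -
  obtain ⟨a, b, -, rfl⟩ := IsFractionRing.div_surjective (A := F[X]) x
  exact div_mem (hp a) (hp b)

variable [Algebra k F] [IsScalarTower k F Ω]

/-- With `f₂` an intermediate field also contains `f₁ = g + u f₂`, hence all of `F`. -/
theorem top_of_mem {f1 f2 : F} (hgen : IntermediateField.adjoin k {f1, f2} = ⊤)
    (H : IntermediateField (sectionField k Ω f1 f2) Ω) (h2 : algebraMap F Ω f2 ∈ H) :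
    H = ⊤ := by
  apply top_of_algebraMap_mem
  have hu : algebraMap F[X] Ω X ∈ H := H.algebraMap_mem (⟨_, IntermediateField.subset_adjoin k _
    (Set.mem_insert _ _)⟩ : sectionField k Ω f1 f2)
  have hg : algebraMap F Ω f1 - algebraMap F[X] Ω X * algebraMap F Ω f2 ∈ H :=
    H.algebraMap_mem (⟨_, IntermediateField.subset_adjoin k _
    (Set.mem_insert_of_mem _ rfl)⟩ : sectionField k Ω f1 f2)
  have h1 : algebraMap F Ω f1 ∈ H := by
    have := add_mem hg (mul_mem hu h2)
    rwa [sub_add_cancel] at this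
  have hle : IntermediateField.adjoin k {f1, f2} ≤
      (H.restrictScalars k).comap (IsScalarTower.toAlgHom k F Ω) := by
    rw [IntermediateField.adjoin_le_iff]
    rintro x (rfl | rfl)
    · exact h1
    · exact h2
  intro f
  exact hle (by rw [hgen]; trivial)

/-- The generic member of the pencil spanned by `f₁, f₂` is primitive: `F(u)` has no field strictly
between itself and `K = k(u, g)`, where `g = f₁ - u f₂`. Indeed `F(u) = K(f₂)`, and `f₂` is a root of
`φ(y) = G(g + u y, y)`, the sheared equation of the curve. Over `F(u)` this `φ` is irreducible up to
powers of `y - f₂`, so the minimal polynomial of `f₂` over an intermediate field `H`, being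
squarefree, is either `y - f₂` or the minimal polynomial over `K`. -/
theorem primitive_of_relation [IsAlgClosed k] [CharZero k] {f1 f2 : F}
    (hgen : IntermediateField.adjoin k {f1, f2} = ⊤)
    {G : k[X][X]} (hG : Irreducible G) (hG0 : aevalAeval f1 f2 G = 0)
    (H : IntermediateField (sectionField k Ω f1 f2) Ω) : H = ⊥ ∨ H = ⊤ := by
  let K := sectionField k Ω f1 f2
  let u : K := ⟨algebraMap F[X] Ω X, IntermediateField.subset_adjoin k _ (Set.mem_insert _ _)⟩
  let g : K := ⟨algebraMap F Ω f1 - algebraMap F[X] Ω X * algebraMap F Ω f2,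
    IntermediateField.subset_adjoin k _ (Set.mem_insert_of_mem _ rfl)⟩
  let α : Ω := algebraMap F Ω f2
  let GF : F[X][X] := G.map (mapRingHom (algebraMap k F))
  have hGF : Prime GF := (irreducible_map_bivariate hG).prime
  let φ : Polynomial Ω := (shear f1 f2 GF).map (algebraMap F[X] Ω)
  have hφ0 : φ ≠ 0 := by
    rw [Ne, Polynomial.map_eq_zero_iff (IsFractionRing.injective F[X] Ω),
      map_eq_zero_iff _ (shear_injective f1 f2)]
    exact hGF.ne_zero
  have hCC : ∀ c : F, algebraMap F[X] Ω (C c) = algebraMap F Ω c := fun c =>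
    (IsScalarTower.algebraMap_apply F F[X] Ω c).symm
  let φK : K[X] := aevalAeval (C g + C u * X) X G
  have hφK : φK.map (algebraMap K Ω) = φ := by
    have h : ((mapRingHom (algebraMap K Ω)).comp
        (aevalAeval (R := k) (C g + C u * X) X : k[X][X] →ₐ[k] K[X]).toRingHom) =
        (mapRingHom (algebraMap F[X] Ω)).comp ((shear f1 f2).toRingHom.comp
          (mapRingHom (mapRingHom (algebraMap k F)))) := by
      apply bivariate_ringHom_ext
      · intro c
        simp [shear_C_C]
        rw [hCC, ← IsScalarTower.algebraMap_apply]
      · simp [shear_C_X]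
        rw [hCC, hCC]
        have h1 : (g : Ω) = algebraMap F Ω f1 - algebraMap F[X] Ω X * algebraMap F Ω f2 := rfl
        have h2 : (u : Ω) = algebraMap F[X] Ω X := rfl
        rw [h1, h2, C_sub, C_mul]
        ring
      · simp [shear_X]
    exact congrArg (fun f : k[X][X] →+* Polynomial Ω => f G) h
  have hroot : aeval α φK = 0 := by
    have h : (((aeval α : K[X] →ₐ[K] Ω).toRingHom).comp
        (aevalAeval (R := k) (C g + C u * X) X : k[X][X] →ₐ[k] K[X]).toRingHom) =
        (algebraMap F Ω).comp (aevalAeval f1 f2 : k[X][X] →ₐ[k] F).toRingHom := by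
      apply bivariate_ringHom_ext
      · intro c
        simp
        rw [← IsScalarTower.algebraMap_apply]
      · simp
        exact sub_add_cancel _ _
      · simp
        rfl
    have h2 := congrArg (fun f : k[X][X] →+* Ω => f G) h
    refine h2.trans ?_
    change algebraMap F Ω (aevalAeval f1 f2 G) = 0
    rw [hG0, map_zero]
  have hint : IsIntegral K α := by
    rw [← isAlgebraic_iff_isIntegral]
    exact ⟨φK, fun h => hφ0 (by rw [← hφK, h, Polynomial.map_zero]), hroot⟩
  have hintH : IsIntegral H α := hint.tower_top
  have : CharZero K := inferInstance
  have : CharZero Ω := charZero_of_injective_algebraMap (algebraMap k Ω).injective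
  have : CharZero H := inferInstance
  let μ : Polynomial Ω := (minpoly K α).map (algebraMap K Ω)
  let q : Polynomial Ω := (minpoly H α).map (algebraMap H Ω)
  have hμφ : μ ∣ φ := by
    rw [← hφK]; exact Polynomial.map_dvd _ (minpoly.dvd K α hroot)
  have hqμ : q ∣ μ := by
    have := Polynomial.map_dvd (algebraMap H Ω) (minpoly.dvd_map_of_isScalarTower K H α)
    rwa [Polynomial.map_map, ← IsScalarTower.algebraMap_eq] at this
  have hμsq : Squarefree μ :=
    ((minpoly.irreducible hint).separable.map).squarefree
  have hqsq : Squarefree q := hμsq.squarefree_of_dvd hqμ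
  have hprime : Prime (X - C α) := prime_X_sub_C α
  obtain ⟨c, hc⟩ := hqμ.trans hμφ
  obtain ⟨n, hn⟩ := shear_factor_field f1 f2 hGF hc
  have hqdeg : q.natDegree = (minpoly H α).natDegree := natDegree_map _
  have hμdeg : μ.natDegree = (minpoly K α).natDegree := natDegree_map _
  have hqroot : X - C α ∣ q := by
    rw [dvd_iff_isRoot, IsRoot, eval_map_algebraMap, minpoly.aeval]
  rcases hn with hn | hn
  -- `q` divides a power of `y - f₂`, so `f₂ ∈ H`
  · right
    have h1 : q ∣ X - C α := by
      rcases Nat.eq_zero_or_pos n with rfl | hn0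
      · exact (isUnit_of_dvd_one (by simpa using hn)).dvd
      · exact (hqsq.dvd_pow_iff_dvd hn0.ne').1 hn
    apply top_of_mem hgen
    have h2 : (minpoly H α).degree = 1 := by
      have h3 := natDegree_le_of_dvd h1 (X_sub_C_ne_zero α)
      rw [natDegree_X_sub_C, hqdeg] at h3
      have := minpoly.natDegree_pos hintH
      rw [degree_eq_natDegree (minpoly.ne_zero hintH),
        show (minpoly H α).natDegree = 1 by omega]
      rfl
    obtain ⟨x, hx⟩ := minpoly.mem_range_of_degree_eq_one H α h2
    change α ∈ H
    rw [← hx]; exact x.2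
  -- the cofactor of `q` divides a power of `y - f₂`, so `q` is the minimal polynomial over `K`
  · left
    obtain ⟨m, hm⟩ := hqμ
    have hmc : m ∣ c := by
      have h1 := hμφ
      have hq0 : q ≠ 0 := by rintro h0; exact hφ0 (by rw [show φ = q * c from hc, h0, zero_mul])
      rw [show φ = q * c from hc, hm] at h1
      exact (mul_dvd_mul_iff_left hq0).1 h1
    have hmu : IsUnit m := by
      obtain ⟨i, hi, hass⟩ := (dvd_prime_pow hprime n).1 (hmc.trans hn)
      rcases Nat.eq_zero_or_pos i with rfl | hi0
      · exact (associated_one_iff_isUnit.1 (by simpa using hass))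
      · exfalso
        have h1 : X - C α ∣ m := (dvd_pow_self _ hi0.ne').trans hass.symm.dvd
        exact hprime.not_isUnit (hμsq (X - C α) (by rw [hm]; exact mul_dvd_mul hqroot h1))
    have hdeg : (minpoly H α).natDegree = (minpoly K α).natDegree := by
      have hμ0 : q * m ≠ 0 := hm ▸ hμsq.ne_zero
      rw [← hqdeg, ← hμdeg, hm, natDegree_mul (left_ne_zero_of_mul hμ0) (right_ne_zero_of_mul hμ0),
        natDegree_eq_zero_of_isUnit hmu, add_zero]
    have htopK : IntermediateField.adjoin K {α} = ⊤ :=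
      top_of_mem hgen _ (IntermediateField.mem_adjoin_simple_self K α)
    have htopH : IntermediateField.adjoin H {α} = ⊤ := by
      have h1 : (IntermediateField.adjoin H {α}).restrictScalars K = ⊤ :=
        top_of_mem hgen _ (IntermediateField.mem_adjoin_simple_self H α)
      rw [eq_top_iff]
      intro x _
      have : x ∈ (IntermediateField.adjoin H {α}).restrictScalars K := by rw [h1]; trivial
      exact this
    have hfrK : Module.finrank K Ω = (minpoly K α).natDegree := by
      rw [← IntermediateField.adjoin.finrank hint, htopK, IntermediateField.finrank_top']
    have hfrH : Module.finrank H Ω = (minpoly H α).natDegree := by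
      rw [← IntermediateField.adjoin.finrank hintH, htopH, IntermediateField.finrank_top']
    have hmul := Module.finrank_mul_finrank K H Ω
    rw [hfrK, hfrH, hdeg] at hmul
    have hpos := minpoly.natDegree_pos hint
    have h1 : Module.finrank K H = 1 := Nat.eq_of_mul_eq_mul_right hpos (by rw [hmul, one_mul])
    exact IntermediateField.finrank_eq_one_iff.1 h1

end Primitive

end

/-! ### The kernel of restriction to the generic member -/

section

open TensorProduct Polynomial

section Coefficients

variable {k F : Type*} [Field k] [Field F] [Algebra k F] {W : Submodule k F} {f1 f2 : F} {k0 : ℕ}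

/-- If `1, f₁` are parameters, then `satB W` is saturated with respect to them. -/
theorem mem_satB_of_parameters
    (hsop : ∀ j, k0 ≤ j → W ^ (j + 1) ≤ W ^ j ⊔ (W ^ j).map (LinearMap.mulLeft k f1))
    {M : ℕ} {f : F} (h1 : f ∈ satB W (M + 1)) (h2 : f1 * f ∈ satB W (M + 1)) :
    f ∈ satB W M := by
  obtain ⟨j1, hj1⟩ := mem_satB.1 h1
  obtain ⟨j2, hj2⟩ := mem_satB.1 h2
  let J := k0 + j1 + j2
  have hJ1 := mem_satB_of_le (j' := J) (by omega) hj1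
  have hJ2 := mem_satB_of_le (j' := J) (by omega) hj2
  refine mem_satB.2 ⟨J + 1, fun y hy => ?_⟩
  obtain ⟨a, ha, _, ⟨b, hb, rfl⟩, rfl⟩ := Submodule.mem_sup.1 (hsop J (by omega) hy)
  have h3 := add_mem (hJ1 a ha) (hJ2 b hb)
  rw [show J + 1 + M = J + (M + 1) by omega]
  convert h3 using 1
  simp only [LinearMap.mulLeft_apply]
  ring

theorem W_mul_mem_satB {M : ℕ} {f c : F} (hf : f ∈ W) (hc : c ∈ satB W M) :
    f * c ∈ satB W (M + 1) := by
  have := mul_satB_le W 1 M (Submodule.mul_mem_mul (by simpa using hf) hc)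
  rwa [add_comm] at this

theorem coeff_pencil_mul_succ (p : F[X]) (i : ℕ) :
    ((C f1 - X * C f2) * p).coeff (i + 1) = f1 * p.coeff (i + 1) - f2 * p.coeff i := by
  rw [sub_mul, coeff_sub, coeff_C_mul, mul_assoc, coeff_X_mul, coeff_C_mul]

theorem coeff_pencil_mul_zero (p : F[X]) :
    ((C f1 - X * C f2) * p).coeff 0 = f1 * p.coeff 0 := by
  rw [sub_mul, coeff_sub, coeff_C_mul, mul_assoc, coeff_X_mul_zero, sub_zero]

/-- Division by the generic linear form `y - (f₁ - u f₂)` lowers the degree in the saturation. The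
recursion for the quotient bounds the degrees of its coefficients, and saturation with respect to
`1, f₁` improves the bound to the expected one. -/
theorem coeff_mem_of_pencil_mul (h1 : (1 : F) ∈ W) (hf1 : f1 ∈ W) (hf2 : f2 ∈ W)
    (hsop : ∀ j, k0 ≤ j → W ^ (j + 1) ≤ W ^ j ⊔ (W ^ j).map (LinearMap.mulLeft k f1))
    {i : ℕ} (γ : F[X][X])
    (hβ : ∀ a b, ((γ * (X - C (C f1 - X * C f2))).coeff b).coeff a ∈ satB W (i + 1)) :
    ∀ a b, (γ.coeff b).coeff a ∈ satB W i := by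
  set h : F[X] := C f1 - X * C f2 with hh
  have hrec : ∀ b, (γ * (X - C h)).coeff (b + 1) = γ.coeff b - γ.coeff (b + 1) * h := fun b => by
    rw [coeff_mul_X_sub_C]
  have hrec0 : (γ * (X - C h)).coeff 0 = - (γ.coeff 0 * h) := by
    rw [mul_coeff_zero]; simp
  have mono := satB_mono h1
  have up : ∀ m b, γ.natDegree < b + m → ∀ a, (γ.coeff b).coeff a ∈ satB W (i + 1 + m) := by
    intro m
    induction m with
    | zero =>
      intro b hb a
      rw [coeff_eq_zero_of_natDegree_lt (p := γ) (by omega), coeff_zero]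
      exact zero_mem _
    | succ m ih =>
      intro b hb a
      have e : γ.coeff b = (γ * (X - C h)).coeff (b + 1) + h * γ.coeff (b + 1) := by
        rw [hrec]; ring
      rw [e, coeff_add]
      refine add_mem (mono (by omega) (hβ a (b + 1))) ?_
      have ih' := ih (b + 1) (by omega)
      rcases a with _ | a
      · rw [hh, coeff_pencil_mul_zero]
        exact W_mul_mem_satB hf1 (ih' 0)
      · rw [hh, coeff_pencil_mul_succ]
        exact sub_mem (W_mul_mem_satB hf1 (ih' _)) (W_mul_mem_satB hf2 (ih' _))
  have down : ∀ M, i ≤ M → (∀ a b, (γ.coeff b).coeff a ∈ satB W (M + 1)) →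
      ∀ a b, (γ.coeff b).coeff a ∈ satB W M := by
    intro M hM hγ
    have hprod : ∀ a b, (h * γ.coeff b).coeff a ∈ satB W (M + 1) := by
      intro a b
      rcases b with _ | b
      · have e : h * γ.coeff 0 = - (γ * (X - C h)).coeff 0 := by rw [hrec0]; ring
        rw [e, coeff_neg]
        exact neg_mem (mono (by omega) (hβ a 0))
      · have e : h * γ.coeff (b + 1) = γ.coeff b - (γ * (X - C h)).coeff (b + 1) := by
          rw [hrec]; ring
        rw [e, coeff_sub]
        exact sub_mem (hγ a b) (mono (by omega) (hβ a (b + 1)))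
    intro a
    induction a with
    | zero =>
      intro b
      have := hprod 0 b
      rw [hh, coeff_pencil_mul_zero] at this
      exact mem_satB_of_parameters hsop (hγ 0 b) this
    | succ a ih =>
      intro b
      have h3 := add_mem (hprod (a + 1) b) (W_mul_mem_satB hf2 (ih b))
      rw [hh, coeff_pencil_mul_succ, sub_add_cancel] at h3
      exact mem_satB_of_parameters hsop (hγ _ b) h3
  have iter : ∀ m, (∀ a b, (γ.coeff b).coeff a ∈ satB W (i + m)) →
      ∀ a b, (γ.coeff b).coeff a ∈ satB W i := by
    intro m
    induction m with
    | zero => exact fun h => h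
    | succ m ih => exact fun h => ih (down (i + m) (by omega) h)
  refine iter (1 + (γ.natDegree + 1)) fun a b => ?_
  rw [← add_assoc]
  exact up _ b (by omega) a

end Coefficients

section Construction

variable {k F K Ω : Type*} [Field k] [Field F] [Algebra k F] [Field K] [Algebra k K]

/-- The substitution of `u` and `g` for the two variables of a polynomial over `F`. -/
noncomputable def pencilι (F : Type*) [Field F] [Algebra k F] (u g : K) : F[X][X] →+* K ⊗[k] F :=
  eval₂RingHom (eval₂RingHom
    (Algebra.TensorProduct.includeRight : F →ₐ[k] K ⊗[k] F).toRingHom (u ⊗ₜ 1)) (g ⊗ₜ 1)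

theorem pencilι_mem (u g : K) {E : Submodule k F} {β : F[X][X]}
    (hβ : ∀ a b, (β.coeff b).coeff a ∈ E) : pencilι (k := k) F u g β ∈ E.baseChange K := by
  rw [pencilι, coe_eval₂RingHom, eval₂_eq_sum_range]
  refine sum_mem fun b _ => ?_
  rw [coe_eval₂RingHom, eval₂_eq_sum_range, Finset.sum_mul]
  refine sum_mem fun a _ => ?_
  have : (Algebra.TensorProduct.includeRight : F →ₐ[k] K ⊗[k] F).toRingHom
      ((β.coeff b).coeff a) * (u ⊗ₜ 1) ^ a * (g ⊗ₜ 1) ^ b =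
      (u ^ a * g ^ b) ⊗ₜ[k] ((β.coeff b).coeff a) := by
    simp [Algebra.TensorProduct.tmul_pow]
  rw [this]
  exact Submodule.tmul_mem_baseChange_of_mem _ (hβ a b)

theorem pencilι_map (u g : K) (Q : k[X][X]) :
    pencilι (k := k) F u g (Q.map (mapRingHom (algebraMap k F))) = aevalAeval u g Q ⊗ₜ 1 := by
  have h : (pencilι (k := k) F u g).comp (mapRingHom (mapRingHom (algebraMap k F))) =
      (Algebra.TensorProduct.includeLeftRingHom).comp
        (aevalAeval (R := k) u g).toRingHom := by
    apply bivariate_ringHom_ext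
    · intro c
      simp [pencilι]
    · simp [pencilι]
    · simp [pencilι]
  exact congrArg (fun f => f Q) h

theorem pencilι_pencil (f1 f2 : F) (u g : K) :
    pencilι (k := k) F u g (X - C (C f1 - X * C f2)) = - (1 ⊗ₜ f1 - u ⊗ₜ f2 - g ⊗ₜ 1) := by
  simp [pencilι]

theorem coeff_map_mul_mem {E : Submodule k F} {β : F[X][X]}
    (hβ : ∀ a b, (β.coeff b).coeff a ∈ E) (Q : k[X][X]) :
    ∀ a b, ((Q.map (mapRingHom (algebraMap k F)) * β).coeff b).coeff a ∈ E := by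
  intro a b
  rw [coeff_mul, finsetSum_coeff]
  refine sum_mem fun x _ => ?_
  rw [coeff_mul]
  refine sum_mem fun y _ => ?_
  rw [coeff_map, coe_mapRingHom, coeff_map, ← Algebra.smul_def]
  exact E.smul_mem _ (hβ _ _)

/-- Every element of a base change becomes polynomial in `u, g` after clearing denominators. -/
theorem exists_pencilι {u g : K}
    (hdiv : ∀ c : K, ∃ P Q : k[X][X], aevalAeval u g Q ≠ 0 ∧ aevalAeval u g Q * c =
      aevalAeval u g P) {E : Submodule k F} {ζ : K ⊗[k] F} (hζ : ζ ∈ E.baseChange K) :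
    ∃ (d : K) (β : F[X][X]), d ≠ 0 ∧
      (∀ a b, (β.coeff b).coeff a ∈ E) ∧ d • ζ = pencilι (k := k) F u g β := by
  suffices h : ∃ (Q : k[X][X]) (β : F[X][X]), aevalAeval u g Q ≠ 0 ∧
      (∀ a b, (β.coeff b).coeff a ∈ E) ∧
      aevalAeval u g Q • ζ = pencilι (k := k) F u g β by
    obtain ⟨Q, β, h⟩ := h
    exact ⟨_, β, h⟩
  have hmap : ∀ (Q : k[X][X]) (β : F[X][X]), pencilι (k := k) F u g
      (Q.map (mapRingHom (algebraMap k F)) * β) = aevalAeval u g Q • pencilι (k := k) F u g β := by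
    intro Q β
    rw [map_mul, pencilι_map, Algebra.smul_def]
    rfl
  rw [bc_eq_span] at hζ
  induction hζ using Submodule.span_induction with
  | mem x hx =>
    obtain ⟨f, hf, rfl⟩ := hx
    refine ⟨1, C (C f), by simp, fun a b => ?_, ?_⟩
    · rw [coeff_C]; split_ifs
      · rw [coeff_C]; split_ifs
        · exact hf
        · exact zero_mem _
      · rw [coeff_zero]; exact zero_mem _
    · simp [pencilι]
  | zero => exact ⟨1, 0, by simp, by simp, by simp⟩
  | add x y _ _ hx hy =>
    obtain ⟨Q, β, hQ, hβ, hx⟩ := hx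
    obtain ⟨Q', β', hQ', hβ', hy⟩ := hy
    refine ⟨Q * Q', Q'.map (mapRingHom (algebraMap k F)) * β +
      Q.map (mapRingHom (algebraMap k F)) * β', ?_, fun a b => ?_, ?_⟩
    · rw [map_mul]; exact mul_ne_zero hQ hQ'
    · rw [coeff_add, coeff_add]
      exact add_mem (coeff_map_mul_mem hβ _ a b) (coeff_map_mul_mem hβ' _ a b)
    · rw [map_add, hmap, hmap, ← hx, ← hy, smul_smul, smul_smul, map_mul, smul_add,
        mul_comm (aevalAeval u g Q')]
  | smul c x _ hx =>
    obtain ⟨Q, β, hQ, hβ, hx⟩ := hx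
    obtain ⟨P, Q', hQ', hc⟩ := hdiv c
    refine ⟨Q' * Q, P.map (mapRingHom (algebraMap k F)) * β, ?_, coeff_map_mul_mem hβ _, ?_⟩
    · rw [map_mul]; exact mul_ne_zero hQ' hQ
    · rw [hmap, ← hx, smul_smul, smul_smul, ← hc, map_mul]
      congr 1
      ring

variable [Field Ω] [Algebra k Ω] [Algebra F Ω] [IsScalarTower k F Ω]
  [Algebra K Ω] [IsScalarTower k K Ω]

variable (k K F Ω) in
/-- The multiplication map `K ⊗ F → Ω`, evaluation at the generic point. -/
noncomputable def evΩ : K ⊗[k] F →ₐ[K] Ω :=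
  Algebra.TensorProduct.lift (Algebra.ofId K Ω) (IsScalarTower.toAlgHom k F Ω)
    (fun _ _ => Commute.all _ _)

@[simp] theorem evΩ_tmul (c : K) (f : F) :
    evΩ k F K Ω (c ⊗ₜ f) = algebraMap K Ω c * algebraMap F Ω f := by
  simp [evΩ, Algebra.ofId_apply]

variable [Algebra F[X] Ω] [IsScalarTower F F[X] Ω]

theorem evΩ_pencilι {f1 f2 : F} {u g : K} (hu : algebraMap K Ω u = algebraMap F[X] Ω X)
    (hg : algebraMap K Ω g = algebraMap F Ω f1 - algebraMap F[X] Ω X * algebraMap F Ω f2)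
    (β : F[X][X]) :
    evΩ k F K Ω (pencilι (k := k) F u g β) =
      algebraMap F[X] Ω (β.eval (C f1 - X * C f2)) := by
  have hC : ∀ c : F, algebraMap F[X] Ω (C c) = algebraMap F Ω c := fun c =>
    (IsScalarTower.algebraMap_apply F F[X] Ω c).symm
  have h : (evΩ k F K Ω).toRingHom.comp (pencilι (k := k) F u g) =
      (algebraMap F[X] Ω).comp (evalRingHom (C f1 - X * C f2)) := by
    apply bivariate_ringHom_ext
    · intro c
      simp [pencilι, hC]
    · simp [pencilι, hu]
    · simp [pencilι, hg, hC]
      exact mul_comm _ _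
  exact congrArg (fun f => f β) h

/-- Restriction to the section `ℓ = f₁ - u f₂ - g` kills only multiples of `ℓ`: write an element of
the kernel as a polynomial in `u, g`, divide by `g - (f₁ - u f₂)`, and bound the coefficients of the
quotient with `coeff_mem_of_pencil_mul`. -/
theorem pencil_ker [IsFractionRing F[X] Ω] {W : Submodule k F} {f1 f2 : F} {k0 : ℕ} {u g : K}
    (h1 : (1 : F) ∈ W) (hf1 : f1 ∈ W) (hf2 : f2 ∈ W)
    (hsop : ∀ j, k0 ≤ j → W ^ (j + 1) ≤ W ^ j ⊔ (W ^ j).map (LinearMap.mulLeft k f1))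
    (hdiv : ∀ c : K, ∃ P Q : k[X][X], aevalAeval u g Q ≠ 0 ∧ aevalAeval u g Q * c =
      aevalAeval u g P)
    (hu : algebraMap K Ω u = algebraMap F[X] Ω X)
    (hg : algebraMap K Ω g = algebraMap F Ω f1 - algebraMap F[X] Ω X * algebraMap F Ω f2)
    (i : ℕ) (ζ : K ⊗[k] F) (hζ : ζ ∈ (satB W (i + 1)).baseChange K) (h0 : evΩ k F K Ω ζ = 0) :
    ∃ ζ' ∈ (satB W i).baseChange K, ζ = (1 ⊗ₜ f1 - u ⊗ₜ f2 - g ⊗ₜ 1) * ζ' := by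
  obtain ⟨d, β, hd, hβ, hdζ⟩ := exists_pencilι hdiv hζ
  have hroot : β.eval (C f1 - X * C f2) = 0 := by
    apply IsFractionRing.injective F[X] Ω
    rw [← evΩ_pencilι (k := k) hu hg, ← hdζ, map_smul, h0, smul_zero, map_zero]
  obtain ⟨γ, hγ⟩ := dvd_iff_isRoot.2 hroot
  rw [mul_comm] at hγ
  rw [hγ] at hβ
  have hγ' := coeff_mem_of_pencil_mul h1 hf1 hf2 hsop γ hβ
  refine ⟨-d⁻¹ • pencilι (k := k) F u g γ, Submodule.smul_mem _ _ (pencilι_mem u g hγ'), ?_⟩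
  rw [hγ, map_mul, pencilι_pencil] at hdζ
  rw [neg_smul, mul_neg, mul_smul_comm, ← smul_neg, eq_inv_smul_iff₀ hd, hdζ]
  ring

theorem pencil_ne_zero [IsFractionRing F[X] Ω] {f1 f2 : F} {u g : K}
    (hf1 : ∀ c : k, algebraMap k F c ≠ f1) (hu : algebraMap K Ω u = algebraMap F[X] Ω X) :
    (1 ⊗ₜ f1 - u ⊗ₜ f2 - g ⊗ₜ 1 : K ⊗[k] F) ≠ 0 := by
  intro h
  have hnot : f1 ∉ Submodule.span k {(1 : F)} := by
    rw [Submodule.mem_span_singleton]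
    rintro ⟨c, hc⟩
    exact hf1 c (by rw [← hc, Algebra.smul_def, mul_one])
  obtain ⟨lam, hlam1, hlam⟩ := Submodule.exists_le_ker_of_notMem hnot
  have hl1 : lam 1 = 0 := hlam (Submodule.mem_span_singleton_self 1)
  have h2 := congrArg (TensorProduct.rid k K ∘ LinearMap.lTensor K lam) h
  simp [hl1] at h2
  have h3 : lam f2 • u = algebraMap k K (lam f1) := by
    rw [Algebra.algebraMap_eq_smul_one]; exact (sub_eq_zero.1 h2).symm
  have h4 := congrArg (algebraMap K Ω) h3
  rw [Algebra.smul_def, map_mul, hu, ← IsScalarTower.algebraMap_apply,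
    ← IsScalarTower.algebraMap_apply, IsScalarTower.algebraMap_apply k F Ω,
    IsScalarTower.algebraMap_apply k F Ω, IsScalarTower.algebraMap_apply F F[X] Ω,
    IsScalarTower.algebraMap_apply F F[X] Ω, ← map_mul] at h4
  have h5 := congrArg (fun p : F[X] => p.coeff 0) (IsFractionRing.injective F[X] Ω h4)
  simp at h5
  exact hlam1 ((map_eq_zero _).1 h5.symm)

end Construction

end

/-! ### The generic member of a pencil as a generic section -/

section

open TensorProduct Polynomial

section SectionField

variable {k F Ω : Type*} [Field k] [Field F] [Field Ω] [Algebra F[X] Ω]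
  [Algebra k Ω] [Algebra F Ω]

variable (k Ω) in
/-- The parameter `u` of the pencil. -/
noncomputable def sectionU (f1 f2 : F) : sectionField k Ω f1 f2 :=
  ⟨algebraMap F[X] Ω X, IntermediateField.subset_adjoin k _ (Set.mem_insert _ _)⟩

variable (k Ω) in
/-- The value `f₁ - u f₂` of the pencil at the generic point. -/
noncomputable def sectionG (f1 f2 : F) : sectionField k Ω f1 f2 :=
  ⟨algebraMap F Ω f1 - algebraMap F[X] Ω X * algebraMap F Ω f2,
    IntermediateField.subset_adjoin k _ (Set.mem_insert_of_mem _ rfl)⟩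

/-- Elements of `k(u, g)` are fractions of polynomials in `u, g`. -/
theorem sectionField_eq_div (f1 f2 : F) (c : sectionField k Ω f1 f2) :
    ∃ P Q : k[X][X], aevalAeval (sectionU k Ω f1 f2) (sectionG k Ω f1 f2) Q ≠ 0 ∧
      aevalAeval (sectionU k Ω f1 f2) (sectionG k Ω f1 f2) Q * c =
        aevalAeval (sectionU k Ω f1 f2) (sectionG k Ω f1 f2) P := by
  let e : k[X][X] →ₐ[k] Ω := aevalAeval (algebraMap F[X] Ω X)
    (algebraMap F Ω f1 - algebraMap F[X] Ω X * algebraMap F Ω f2)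
  have hval : ∀ P : k[X][X], ((aevalAeval (sectionU k Ω f1 f2) (sectionG k Ω f1 f2) P :
      sectionField k Ω f1 f2) : Ω) = e P := by
    intro P
    have : ((sectionField k Ω f1 f2).val).comp
        (aevalAeval (R := k) (sectionU k Ω f1 f2) (sectionG k Ω f1 f2)) = e := by
      apply bivariate_algHom_ext <;> simp [e] <;> rfl
    exact congrArg (fun f => f P) this
  have hle : Algebra.adjoin k {algebraMap F[X] Ω X,
      algebraMap F Ω f1 - algebraMap F[X] Ω X * algebraMap F Ω f2} ≤ e.range := by
    rw [Algebra.adjoin_le_iff]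
    rintro x (rfl | rfl)
    · exact ⟨C X, by simp [e]⟩
    · exact ⟨X, by simp [e]⟩
  obtain ⟨x, hx, y, hy, hc⟩ := IntermediateField.mem_adjoin_iff_div.1 c.2
  obtain ⟨P, hP⟩ := hle hx
  obtain ⟨Q, hQ⟩ := hle hy
  change e P = x at hP
  change e Q = y at hQ
  by_cases h0 : y = 0
  · refine ⟨0, 1, by simp, ?_⟩
    rw [h0, div_zero] at hc
    have : c = 0 := Subtype.ext hc
    rw [this]; simp
  · refine ⟨P, Q, fun h => h0 ?_, Subtype.ext ?_⟩
    · rw [← hQ, ← hval Q, h]; rfl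
    · rw [IntermediateField.coe_mul, hval, hval, hc, hP, hQ]
      exact mul_div_cancel₀ _ h0

variable [IsFractionRing F[X] Ω] [IsScalarTower F F[X] Ω] [Algebra k F] [IsScalarTower k F Ω]

variable (k Ω) in
/-- The generic linear form `f₁ - u f₂ - g`. -/
noncomputable def sectionℓ (f1 f2 : F) : sectionField k Ω f1 f2 ⊗[k] F :=
  1 ⊗ₜ f1 - sectionU k Ω f1 f2 ⊗ₜ f2 - sectionG k Ω f1 f2 ⊗ₜ 1

/-- The generic member of the pencil `⟨f₁, f₂⟩`, where `f₁` is a parameter and `f₁, f₂` generate the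
function field, has all properties of a generic section, with `Ω = F(u)` and `K = k(u, g)`. -/
theorem genericSection_pencil [IsAlgClosed k] [CharZero k] {W : Submodule k F} {f1 f2 : F}
    {k0 : ℕ} (h1 : (1 : F) ∈ W) (hf1 : f1 ∈ W) (hf2 : f2 ∈ W)
    (hsop : ∀ j, k0 ≤ j → W ^ (j + 1) ≤ W ^ j ⊔ (W ^ j).map (LinearMap.mulLeft k f1))
    (hconst : ∀ c : k, algebraMap k F c ≠ f1)
    (htop : IntermediateField.adjoin k (W : Set F) = ⊤)
    (hgen : IntermediateField.adjoin k {f1, f2} = ⊤)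
    {G : k[X][X]} (hG : Irreducible G) (hG0 : aevalAeval f1 f2 G = 0) :
    GenericSection W (evΩ k F (sectionField k Ω f1 f2) Ω) (sectionℓ k Ω f1 f2) where
  mem := by
    refine sub_mem (sub_mem ?_ ?_) ?_ <;>
      exact Submodule.tmul_mem_baseChange_of_mem _ (by assumption)
  regular := by
    intro ζ hζ
    have := isDomain_tensorProduct (k := k) (A := sectionField k Ω f1 f2) (B := F)
    exact (mul_eq_zero.1 hζ).resolve_left
      (pencil_ne_zero (Ω := Ω) hconst (u := sectionU k Ω f1 f2) rfl)
  ev_eq_zero := by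
    rw [sectionℓ, map_sub, map_sub, evΩ_tmul, evΩ_tmul, evΩ_tmul, map_one, one_mul, map_one,
      mul_one]
    exact sub_self _
  ker := pencil_ker h1 hf1 hf2 hsop (sectionField_eq_div f1 f2) rfl rfl
  generate := by
    intro S hS hWS
    have hinv : ∀ x ∈ S, x⁻¹ ∈ S := by
      intro x hx
      have hint : IsIntegral (sectionField k Ω f1 f2) (⟨x, hx⟩ : S) := IsIntegral.of_finite _ _
      exact S.inv_mem_of_algebraic (x := ⟨x, hx⟩) (hint.map S.val).isAlgebraic
    let H := S.toIntermediateField hinv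
    have hH : H = ⊤ := by
      apply top_of_algebraMap_mem
      have hle : IntermediateField.adjoin k (W : Set F) ≤
          (H.restrictScalars k).comap (IsScalarTower.toAlgHom k F Ω) := by
        rw [IntermediateField.adjoin_le_iff]
        intro f hf
        have := hWS f hf
        rw [evΩ_tmul, map_one, one_mul] at this
        exact this
      intro f
      exact hle (by rw [htop]; trivial)
    rw [eq_top_iff]
    intro x _
    have : x ∈ H := by rw [hH]; trivial
    exact this
  primitive := fun _ H => primitive_of_relation hgen hG hG0 H

end SectionField

end

/-! ### Choice of the pencil -/

section

open TensorProduct Polynomial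

section PrimitiveElement

variable {k F : Type*} [Field k] [Field F] [Algebra k F]

/-- Noether normalization: `F` is finite over `k(f₁)`. -/
theorem finite_over_parameter {W : Submodule k F} [FiniteDimensional k W] {f1 : F} {k0 : ℕ}
    (h1 : (1 : F) ∈ W)
    (hsop : ∀ j, k0 ≤ j → W ^ (j + 1) ≤ W ^ j ⊔ (W ^ j).map (LinearMap.mulLeft k f1))
    (htop : IntermediateField.adjoin k (W : Set F) = ⊤) :
    FiniteDimensional (IntermediateField.adjoin k {f1}) F := by
  set K := IntermediateField.adjoin k {f1}
  let M : Submodule K F := Submodule.span K ((W ^ k0 : Submodule k F) : Set F)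
  have hWM : ∀ j, W ^ j ≤ M.restrictScalars k := by
    intro j
    rcases le_total j k0 with hj | hj
    · exact (pow_mono_of_one_mem h1 hj).trans fun x hx => Submodule.subset_span hx
    · induction j, hj using Nat.le_induction with
      | base => exact fun x hx => Submodule.subset_span hx
      | succ j hj ih =>
        refine (hsop j hj).trans (sup_le ih ?_)
        rintro _ ⟨x, hx, rfl⟩
        exact M.smul_mem (⟨f1, IntermediateField.mem_adjoin_simple_self k f1⟩ : K) (ih hx)
  have hMfg : M.FG := by
    have hfg : (W ^ k0).FG := Submodule.FG.pow (Module.Finite.iff_fg.1 inferInstance) k0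
    obtain ⟨t, ht⟩ := hfg
    refine ⟨t, le_antisymm ?_ ?_⟩
    · rw [Submodule.span_le]
      exact fun x hx => Submodule.subset_span (ht ▸ Submodule.subset_span hx)
    · rw [Submodule.span_le, ← ht]
      exact Submodule.span_le_restrictScalars k K (t : Set F)
  have hMmul : M * M ≤ M := by
    rw [Submodule.span_mul_span, Submodule.span_le]
    rintro _ ⟨x, hx, y, hy, rfl⟩
    exact hWM (k0 + k0) (by rw [pow_add]; exact Submodule.mul_mem_mul hx hy)
  let S : Subalgebra K F := Submodule.toSubalgebra M
    (Submodule.subset_span (pow_mono_of_one_mem h1 (Nat.zero_le k0) (by simp)))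
    (fun x y hx hy => hMmul (Submodule.mul_mem_mul hx hy))
  have hSfin : FiniteDimensional K S := Module.Finite.iff_fg.2 hMfg
  have hinv : ∀ x ∈ S, x⁻¹ ∈ S := fun x hx =>
    S.inv_mem_of_algebraic (x := ⟨x, hx⟩)
      ((IsIntegral.of_finite K (⟨x, hx⟩ : S)).map S.val).isAlgebraic
  have hle : IntermediateField.adjoin k (W : Set F) ≤
      (S.toIntermediateField hinv).restrictScalars k := by
    rw [IntermediateField.adjoin_le_iff]
    intro x hx
    exact hWM 1 (by simpa using hx)
  have hM : M = ⊤ := by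
    rw [eq_top_iff]
    intro x _
    exact hle (by rw [htop]; trivial)
  exact ⟨hM ▸ hMfg⟩

/-- A primitive element of `F / k(f₁)` can be found in `W`: there are finitely many proper
intermediate fields, and they do not cover `W`. -/
theorem exists_primitive_mem [CharZero k] {W : Submodule k F} {f1 : F}
    [FiniteDimensional (IntermediateField.adjoin k {f1}) F]
    (htop : IntermediateField.adjoin k (W : Set F) = ⊤) :
    ∃ f2 ∈ W, IntermediateField.adjoin k {f1, f2} = ⊤ := by
  set K := IntermediateField.adjoin k {f1}
  have : CharZero K := charZero_of_injective_algebraMap (algebraMap k K).injective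
  have hfin : Finite (IntermediateField K F) :=
    (Field.exists_primitive_element_iff_finite_intermediateField K F).1
      ⟨inferInstance, Field.exists_primitive_element K F⟩
  let p : {H : IntermediateField K F // H ≠ ⊤} → Subspace k W := fun H =>
    ((H.1.restrictScalars k).toSubalgebra.toSubmodule).comap W.subtype
  have hcov : ⋃ i, (p i : Set W) ≠ Set.univ := by
    intro h
    obtain ⟨H, hH⟩ := Subspace.exists_eq_top_of_iUnion_eq_univ h
    apply H.2
    have hle : IntermediateField.adjoin k (W : Set F) ≤ H.1.restrictScalars k := by
      rw [IntermediateField.adjoin_le_iff]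
      intro x hx
      have : (⟨x, hx⟩ : W) ∈ p H := by rw [hH]; trivial
      exact this
    rw [eq_top_iff]
    intro x _
    exact hle (by rw [htop]; trivial)
  rw [Set.ne_univ_iff_exists_notMem] at hcov
  obtain ⟨f2, hf2⟩ := hcov
  refine ⟨f2, f2.2, ?_⟩
  have h2 : IntermediateField.adjoin K {(f2 : F)} = ⊤ := by
    by_contra hne
    refine hf2 (Set.mem_iUnion.2 ⟨⟨_, hne⟩, ?_⟩)
    exact IntermediateField.mem_adjoin_simple_self K (f2 : F)
  have h3 := IntermediateField.adjoin_adjoin_left k {f1} {(f2 : F)}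
  rw [← Set.singleton_union, ← h3]
  change (IntermediateField.adjoin K {(f2 : F)}).restrictScalars k = ⊤
  rw [h2, IntermediateField.restrictScalars_top]

open scoped IntermediateField.algebraAdjoinAdjoin in
/-- The equation of the plane curve parametrized by `(f₁, f₂)`. -/
theorem exists_irreducible_relation {f1 f2 : F}
    [FiniteDimensional (IntermediateField.adjoin k {f1}) F] :
    ∃ G : k[X][X], Irreducible G ∧ aevalAeval f1 f2 G = 0 := by
  have halg : IsAlgebraic (IntermediateField.adjoin k {f1}) f2 := Algebra.IsAlgebraic.isAlgebraic f2
  have halg' : IsAlgebraic (Algebra.adjoin k {f1}) f2 :=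
    (IsFractionRing.isAlgebraic_iff (Algebra.adjoin k {f1})
      (IntermediateField.adjoin k {f1}) F).2 halg
  obtain ⟨p, hp0, hp⟩ := halg'
  let e : k[X] →ₐ[k] Algebra.adjoin k {f1} :=
    aeval (⟨f1, Algebra.self_mem_adjoin_singleton k f1⟩ : Algebra.adjoin k {f1})
  have he : Function.Surjective e := by
    rintro ⟨y, hy⟩
    obtain ⟨q, rfl⟩ := Algebra.adjoin_singleton_eq_range_aeval k f1 ▸ hy
    refine ⟨q, Subtype.ext ?_⟩
    simp [e, aeval_subalgebra_coe]
  obtain ⟨P, hP⟩ := Polynomial.map_surjective e.toRingHom he p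
  have hP0 : P ≠ 0 := by rintro rfl; exact hp0 (by simpa using hP.symm)
  have hPz : aevalAeval f1 f2 P = 0 := by
    rw [← hp, ← hP]
    have : (aevalAeval f1 f2 : k[X][X] →ₐ[k] F).toRingHom =
        (aeval f2 : (Algebra.adjoin k {f1})[X] →ₐ[_] F).toRingHom.comp (mapRingHom e.toRingHom) := by
      apply bivariate_ringHom_ext
      · intro c; simp [e]
      · simp [e]
      · simp
    exact congrArg (fun f => f P) this
  have hprime : (RingHom.ker (aevalAeval f1 f2 : k[X][X] →ₐ[k] F)).IsPrime := RingHom.ker_isPrime _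
  obtain ⟨G, hG, hGp⟩ := hprime.exists_mem_prime_of_ne_bot
    (fun h => hP0 (by rw [← Ideal.mem_bot, ← h]; exact hPz))
  exact ⟨G, hGp.irreducible, hG⟩

/-- The main estimates for `W`, from the existence of a linear parameter `f₁`. -/
theorem satB_estimates [IsAlgClosed k] [CharZero k] {W : Submodule k F} [FiniteDimensional k W]
    {f1 : F} {k0 : ℕ} (h1 : (1 : F) ∈ W) (hf1 : f1 ∈ W)
    (hsop : ∀ j, k0 ≤ j → W ^ (j + 1) ≤ W ^ j ⊔ (W ^ j).map (LinearMap.mulLeft k f1))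
    (htop : IntermediateField.adjoin k (W : Set F) = ⊤) {s p : ℤ} {N : ℕ} (hs0 : s ≠ 0)
    (hw : ∀ t : ℕ, N ≤ t → (Module.finrank k ↥(W ^ t) : ℤ) = s * t + 1 - p)
    (hs : s ≤ 2 * Module.finrank k W - 4) :
    (∀ i, (satB W i).FG) ∧
    (∀ i, 1 ≤ i → (Module.finrank k (satB W i) : ℤ) = s * i + 1 - p) ∧
    ∀ i, 1 ≤ i → (Module.finrank k (satB W (i + 1)) : ℤ) - Module.finrank k ↥(W ^ (i + 1)) ≤
      max 0 ((Module.finrank k (satB W i) : ℤ) - Module.finrank k ↥(W ^ i) - 1) := by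
  -- for constant `f₁` the powers of `W` would stop growing
  have hconst : ∀ c : k, algebraMap k F c ≠ f1 := by
    intro c hc
    have heq : W ^ (max N k0 + 1) = W ^ max N k0 := by
      refine le_antisymm ((hsop _ (le_max_right _ _)).trans (sup_le le_rfl ?_))
        (pow_mono_of_one_mem h1 (Nat.le_succ _))
      rintro _ ⟨x, hx, rfl⟩
      rw [LinearMap.mulLeft_apply, ← hc, ← Algebra.smul_def]
      exact Submodule.smul_mem _ c hx
    have e1 := hw (max N k0 + 1) (by omega)
    have e2 := hw (max N k0) (by omega)
    rw [heq, e2] at e1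
    push_cast at e1
    exact hs0 (by linarith)
  have := finite_over_parameter h1 hsop htop
  obtain ⟨f2, hf2, hgen⟩ := exists_primitive_mem (f1 := f1) htop
  obtain ⟨G, hG, hG0⟩ := exists_irreducible_relation (k := k) (f1 := f1) (f2 := f2)
  exact (genericSection_pencil (Ω := FractionRing F[X]) h1 hf1 hf2 hsop hconst htop hgen hG
    hG0).estimates h1 hw hs

end PrimitiveElement

end

/-! ### Existence of a linear parameter -/

section Parameter

/-- Outside the associated primes of `A / (ℓ₀)` that do not contain `V`, an element of `V` is a
nonzerodivisor on `A / (ℓ₀)` in high degree: the part it kills has all its associated primes over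
`V`, hence is killed by a power of `(V)`, and by Artin-Rees it meets high powers of `(V)` in `0`. -/
theorem exists_parameter {k A : Type*} [Field k] [Infinite k] [CommRing A] [Algebra k A]
    [IsNoetherianRing A] (V : Submodule k A) (ℓ₀ : A) :
    ∃ ℓ₁ ∈ V, ∃ N : ℕ, ∀ i, N ≤ i → ∀ z ∈ V ^ i, ℓ₁ * z ∈ Ideal.span {ℓ₀} →
      z ∈ Ideal.span {ℓ₀} := by
  let D := A ⧸ Ideal.span {ℓ₀}
  let m : Ideal A := Ideal.span (V : Set A)
  have hVm : ∀ i, V ^ i ≤ (m ^ i).restrictScalars k := by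
    intro i
    induction i with
    | zero => simp
    | succ i ih =>
      rw [pow_succ, Submodule.mul_le]
      intro x hx y hy
      rw [pow_succ]
      exact Ideal.mul_mem_mul (ih hx) (Ideal.subset_span hy)
  have : Finite (associatedPrimes A D) := associatedPrimes.finite A D
  let p : {P : associatedPrimes A D // ¬ V ≤ P.1.restrictScalars k} → Subspace k V := fun P =>
    (P.1.1.restrictScalars k).comap V.subtype
  have hcov : ⋃ i, (p i : Set V) ≠ Set.univ := by
    intro h
    obtain ⟨P, hP⟩ := Subspace.exists_eq_top_of_iUnion_eq_univ h
    apply P.2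
    intro x hx
    have : (⟨x, hx⟩ : V) ∈ p P := by rw [hP]; trivial
    exact this
  rw [Set.ne_univ_iff_exists_notMem] at hcov
  obtain ⟨ℓ₁, hℓ⟩ := hcov
  let T : Submodule A D := LinearMap.ker (LinearMap.lsmul A D (ℓ₁ : A))
  have hrad : m ≤ (Module.annihilator A T).radical := by
    rw [← Ideal.sInf_minimalPrimes]
    refine le_sInf fun P hP => ?_
    have hPT := Module.associatedPrimes.minimalPrimes_annihilator_subset_associatedPrimes A T hP
    have hPD := associatedPrimes.subset_of_injective T.subtype_injective hPT
    have hℓP : (ℓ₁ : A) ∈ P := by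
      refine hP.1.2 (Module.mem_annihilator.2 ?_)
      rintro ⟨d, hd⟩
      exact Subtype.ext hd
    by_contra hmP
    refine hℓ (Set.mem_iUnion.2 ⟨⟨⟨P, hPD⟩, fun hV => hmP (Ideal.span_le.2 hV)⟩, hℓP⟩)
  obtain ⟨q, hq⟩ := Ideal.exists_pow_le_of_le_radical_of_fg hrad (IsNoetherian.noetherian m)
  obtain ⟨c, hc⟩ := Ideal.exists_pow_inf_eq_pow_smul m T
  refine ⟨ℓ₁, ℓ₁.2, c + q, fun i hi z hz hℓz => ?_⟩
  have hzT : (Ideal.Quotient.mk (Ideal.span {ℓ₀}) z : D) ∈ T := by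
    change (ℓ₁ : A) • (Ideal.Quotient.mk (Ideal.span {ℓ₀}) z : D) = 0
    rw [Algebra.smul_def]
    change (Ideal.Quotient.mk _ (ℓ₁ : A)) * _ = (0 : D)
    rw [← map_mul]
    exact Ideal.Quotient.eq_zero_iff_mem.2 hℓz
  have hzm : (Ideal.Quotient.mk (Ideal.span {ℓ₀}) z : D) ∈ (m ^ i • ⊤ : Submodule A D) := by
    have : (Ideal.Quotient.mk (Ideal.span {ℓ₀}) z : D) = z • (1 : D) := by
      rw [Algebra.smul_def, mul_one]; rfl
    rw [this]
    exact Submodule.smul_mem_smul (hVm i hz) trivial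
  have hz0 : (Ideal.Quotient.mk (Ideal.span {ℓ₀}) z : D) ∈ (⊥ : Submodule A D) := by
    have h := hc i (by omega) ▸ (Submodule.mem_inf.2 ⟨hzm, hzT⟩)
    refine (Submodule.smul_le.2 ?_) h
    intro a ha d hd
    have ha' := Module.mem_annihilator.1 (hq (Ideal.pow_le_pow_right (by omega) ha)) ⟨d, hd.2⟩
    exact congrArg Subtype.val ha'
  exact Ideal.Quotient.eq_zero_iff_mem.1 ((Submodule.mem_bot A).1 hz0)

variable {k F : Type*} [Field k] [Field F] [Algebra k F]

/-- A linear parameter which is regular in high degree generates `W ^ (j + 1)` over `W ^ j` once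
the Hilbert function is linear. -/
theorem parameter_generates {W : Submodule k F} [FiniteDimensional k W] {f1 : F} {s p : ℤ}
    {N : ℕ} (h1 : (1 : F) ∈ W) (hf1 : f1 ∈ W) (hs0 : 0 < s)
    (hw : ∀ t : ℕ, N ≤ t → (Module.finrank k ↥(W ^ t) : ℤ) = s * t + 1 - p)
    (hreg : ∀ i, N ≤ i → ∀ z ∈ W ^ (i + 1), f1 * z ∈ W ^ (i + 1) → z ∈ W ^ i) :
    ∀ j, N + 1 ≤ j → W ^ (j + 1) ≤ W ^ j ⊔ (W ^ j).map (LinearMap.mulLeft k f1) := by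
  have hfd : ∀ i, FiniteDimensional k ↥(W ^ i) := fun i =>
    Module.Finite.iff_fg.2 (Submodule.FG.pow (Module.Finite.iff_fg.1 inferInstance) i)
  intro j hj
  obtain ⟨i, rfl⟩ : ∃ i, j = i + 1 := ⟨j - 1, by omega⟩
  have hi : N ≤ i := by omega
  have e0 := hw i hi
  have e1 := hw (i + 1) (by omega)
  have e2 := hw (i + 1 + 1) (by omega)
  have hf0 : f1 ≠ 0 := by
    rintro rfl
    have hle : W ^ (i + 1) ≤ W ^ i := fun z hz => hreg i hi z hz (by simp)
    have := Submodule.finrank_mono hle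
    push_cast at e1
    nlinarith
  have hinj : Function.Injective (LinearMap.mulLeft k f1) := mul_right_injective₀ hf0
  have hQ : ∀ l, Module.finrank k ((W ^ l).map (LinearMap.mulLeft k f1)) =
      Module.finrank k ↥(W ^ l) := fun l =>
    (Submodule.equivMapOfInjective _ hinj (W ^ l)).finrank_eq.symm
  have hinf : W ^ (i + 1) ⊓ (W ^ (i + 1)).map (LinearMap.mulLeft k f1) ≤
      (W ^ i).map (LinearMap.mulLeft k f1) := by
    rintro _ ⟨hz1, z, hz, rfl⟩
    exact ⟨z, hreg i hi z hz hz1, rfl⟩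
  have hle : W ^ (i + 1) ⊔ (W ^ (i + 1)).map (LinearMap.mulLeft k f1) ≤ W ^ (i + 1 + 1) := by
    refine sup_le (pow_mono_of_one_mem h1 (Nat.le_succ _)) ?_
    rintro _ ⟨z, hz, rfl⟩
    rw [pow_succ', LinearMap.mulLeft_apply]
    exact Submodule.mul_mem_mul hf1 hz
  have hsum := Submodule.finrank_sup_add_finrank_inf_eq (W ^ (i + 1))
    ((W ^ (i + 1)).map (LinearMap.mulLeft k f1))
  have hinf' := Submodule.finrank_mono hinf
  rw [hQ] at hsum hinf'
  refine (Submodule.eq_of_le_of_finrank_le hle ?_).ge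
  push_cast at e1 e2
  zify at hsum hinf' ⊢
  linarith

/-- The estimates for `W`, without assuming that `W` generates the field. -/
theorem satB_estimates' [IsAlgClosed k] [CharZero k] {W : Submodule k F} [FiniteDimensional k W]
    {f1 : F} {k0 : ℕ} (h1 : (1 : F) ∈ W) (hf1 : f1 ∈ W)
    (hsop : ∀ j, k0 ≤ j → W ^ (j + 1) ≤ W ^ j ⊔ (W ^ j).map (LinearMap.mulLeft k f1))
    {s p : ℤ} {N : ℕ} (hs0 : s ≠ 0)
    (hw : ∀ t : ℕ, N ≤ t → (Module.finrank k ↥(W ^ t) : ℤ) = s * t + 1 - p)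
    (hs : s ≤ 2 * Module.finrank k W - 4) :
    (∀ i, (satB W i).FG) ∧
    (∀ i, 1 ≤ i → (Module.finrank k (satB W i) : ℤ) = s * i + 1 - p) ∧
    ∀ i, 1 ≤ i → (Module.finrank k (satB W (i + 1)) : ℤ) - Module.finrank k ↥(W ^ (i + 1)) ≤
      max 0 ((Module.finrank k (satB W i) : ℤ) - Module.finrank k ↥(W ^ i) - 1) := by
  let L := IntermediateField.adjoin k (W : Set F)
  let v : L →ₐ[k] F := L.val
  have hv : Function.Injective v.toLinearMap := L.val.injective
  let W' : Submodule k L := W.comap v.toLinearMap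
  have hWL : ∀ x ∈ W, x ∈ L := fun x hx => IntermediateField.subset_adjoin k _ hx
  have hmap : W'.map v.toLinearMap = W := by
    rw [Submodule.map_comap_eq, inf_eq_right]
    exact fun x hx => ⟨⟨x, hWL x hx⟩, rfl⟩
  have hpow : ∀ i, (W' ^ i).map v.toLinearMap = W ^ i := fun i => by
    rw [Submodule.map_pow, hmap]
  have hmem : ∀ i (x : L), x ∈ W' ^ i ↔ (x : F) ∈ W ^ i := fun i x => by
    rw [← hpow i]
    exact ⟨fun h => ⟨x, h, rfl⟩, fun ⟨y, hy, hyx⟩ => hv hyx ▸ hy⟩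
  have hone : ∀ j, (1 : F) ∈ W ^ j := fun j => by
    simpa using pow_mono_of_one_mem h1 (Nat.zero_le j) (show (1 : F) ∈ W ^ 0 by simp)
  have hpowL : ∀ i, ∀ x ∈ W ^ i, x ∈ L := fun i x hx => by
    rw [← hpow i] at hx
    obtain ⟨y, -, rfl⟩ := hx
    exact y.2
  have hsat : ∀ i, (satB W' i).map v.toLinearMap = satB W i := by
    intro i
    ext x
    constructor
    · rintro ⟨y, hy, rfl⟩
      obtain ⟨j, hj⟩ := mem_satB.1 hy
      refine mem_satB.2 ⟨j, fun z hz => ?_⟩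
      exact (hmem _ _).1 (hj ⟨z, hpowL j z hz⟩ ((hmem _ _).2 hz))
    · intro hx
      obtain ⟨j, hj⟩ := mem_satB.1 hx
      have hxL : x ∈ L := hpowL _ x (by simpa using hj 1 (hone j))
      refine ⟨⟨x, hxL⟩, mem_satB.2 ⟨j, fun z hz => ?_⟩, rfl⟩
      exact (hmem _ _).2 (hj z ((hmem _ _).1 hz))
  have hfin : ∀ P : Submodule k L, Module.finrank k (P.map v.toLinearMap) = Module.finrank k P :=
    fun P => (Submodule.equivMapOfInjective _ hv P).finrank_eq.symm
  have : FiniteDimensional k W' := by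
    have e := Submodule.equivMapOfInjective _ hv W'
    rw [hmap] at e
    exact Module.Finite.equiv e.symm
  have htop : IntermediateField.adjoin k (W' : Set L) = ⊤ := by
    have hl : IntermediateField.lift (IntermediateField.adjoin k (W' : Set L)) = L := by
      rw [IntermediateField.lift_adjoin]
      congr 1
      exact congrArg (fun P : Submodule k F => (P : Set F)) hmap
    apply IntermediateField.lift_injective
    rw [hl, IntermediateField.lift_top]
  have key := satB_estimates (W := W') (f1 := ⟨f1, hWL f1 hf1⟩) (k0 := k0) (N := N) (p := p) h1 hf1
    (fun j hj x hx => by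
      obtain ⟨a, ha, _, ⟨b, hb, rfl⟩, hab⟩ := Submodule.mem_sup.1 (hsop j hj ((hmem _ _).1 hx))
      refine Submodule.mem_sup.2 ⟨⟨a, hpowL j a ha⟩, (hmem _ _).2 ha, _,
        ⟨⟨b, hpowL j b hb⟩, (hmem _ _).2 hb, rfl⟩, Subtype.ext hab⟩) htop hs0
    (fun t ht => by rw [← hfin, hpow]; exact hw t ht)
    (by rw [← hfin W', hmap]; exact hs)
  obtain ⟨k1, k2, k3⟩ := key
  refine ⟨fun i => hsat i ▸ (k1 i).map _, fun i hi => ?_, fun i hi => ?_⟩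
  · rw [← hsat, hfin]; exact k2 i hi
  · rw [← hsat, ← hsat, hfin, hfin, ← hpow, ← hpow, hfin, hfin]; exact k3 i hi

end Parameter

/-! ### Linear forms on the curve -/

section Translation

open MvPolynomial

variable {r : ℕ} (I : Ideal (MPoly r)) [I.IsPrime]

/-- Polynomials as rational functions on the cone over `V(I)`. -/
noncomputable def toFrac : MPoly r →ₐ[ℂ] FractionRing (MPoly r ⧸ I) :=
  (IsScalarTower.toAlgHom ℂ (MPoly r ⧸ I) (FractionRing (MPoly r ⧸ I))).comp
    (Ideal.Quotient.mkₐ ℂ I)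

/-- The linear forms on `V(I)`, dehomogenized by the coordinate `x_c`. -/
noncomputable def affW (c : Fin r) : Submodule ℂ (FractionRing (MPoly r ⧸ I)) :=
  Submodule.span ℂ {(toFrac I (X c))⁻¹} * (homogeneousSubmodule (Fin r) ℂ 1).map
    (toFrac I).toLinearMap

variable {I}

theorem toFrac_eq_iff {I : Ideal (MPoly r)} {f g : MPoly r} :
    toFrac I f = toFrac I g ↔ Ideal.Quotient.mk I f = Ideal.Quotient.mk I g :=
  (IsFractionRing.injective (MPoly r ⧸ I) (FractionRing (MPoly r ⧸ I))).eq_iff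

/-- `Wⁱ` consists of the degree `i` forms divided by `x_cⁱ`. -/
theorem mem_affW_pow {c : Fin r} {i : ℕ} {y : FractionRing (MPoly r ⧸ I)} :
    y ∈ affW I c ^ i ↔
      ∃ a ∈ homogeneousSubmodule (Fin r) ℂ i, ((toFrac I (X c)) ^ i)⁻¹ * toFrac I a = y := by
  rw [affW, mul_pow, Submodule.span_pow, Set.singleton_pow, ← Submodule.map_pow,
    homogeneousSubmodule_one_pow, Submodule.mem_span_singleton_mul, inv_pow]
  exact ⟨fun ⟨z, ⟨a, ha, hz⟩, hy⟩ => ⟨a, ha, hz ▸ hy⟩, fun ⟨a, ha, hy⟩ => ⟨_, ⟨a, ha, rfl⟩, hy⟩⟩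

variable {c : Fin r}

theorem one_mem_affW (hc : toFrac I (X c) ≠ 0) : (1 : FractionRing (MPoly r ⧸ I)) ∈ affW I c := by
  rw [← pow_one (affW I c), mem_affW_pow]
  exact ⟨X c, isHomogeneous_X ℂ c, by rw [pow_one, inv_mul_cancel₀ hc]⟩

/-- Division by `x_cⁱ` identifies `(R / I)_i` with `Wⁱ`. -/
theorem finrank_affW_pow (hc : toFrac I (X c) ≠ 0) (i : ℕ) :
    Module.finrank ℂ ↥(affW I c ^ i) = Module.finrank ℂ (degQ I i) := by
  let L : (MPoly r ⧸ I) →ₗ[ℂ] FractionRing (MPoly r ⧸ I) :=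
    (LinearMap.mulLeft ℂ ((toFrac I (X c)) ^ i)⁻¹).comp
      (IsScalarTower.toAlgHom ℂ (MPoly r ⧸ I) (FractionRing (MPoly r ⧸ I))).toLinearMap
  have hL : Function.Injective L :=
    (mul_right_injective₀ (inv_ne_zero (pow_ne_zero i hc))).comp
      (IsFractionRing.injective (MPoly r ⧸ I) (FractionRing (MPoly r ⧸ I)))
  have : (degQ I i).map L = affW I c ^ i := by
    ext y
    rw [mem_affW_pow]
    constructor
    · rintro ⟨_, ⟨a, ha, rfl⟩, rfl⟩
      exact ⟨a, ha, rfl⟩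
    · rintro ⟨a, ha, rfl⟩
      exact ⟨_, ⟨a, ha, rfl⟩, rfl⟩
  rw [← this]
  exact (Submodule.equivMapOfInjective L hL _).finrank_eq.symm

theorem finite_homogeneousSubmodule (i : ℕ) :
    Module.Finite ℂ (homogeneousSubmodule (Fin r) ℂ i) := by
  rw [← homogeneousSubmodule_one_pow, homogeneousSubmodule_one_eq_span_X]
  exact Module.Finite.iff_fg.2 ((Submodule.fg_span (Set.finite_range _)).pow i)

theorem finite_affW : FiniteDimensional ℂ (affW I c) := by
  have := finite_homogeneousSubmodule (r := r) 1
  exact Module.Finite.iff_fg.2 ((Submodule.fg_span_singleton _).mul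
    ((Module.Finite.iff_fg.1 this).map _))

theorem homogeneousComponent_X_mul (c : Fin r) (f : MPoly r) (i : ℕ) :
    homogeneousComponent (i + 1) (X c * f) = X c * homogeneousComponent i f := by
  have h := @DirectSum.coe_decompose_mul_add_of_left_mem ℕ (MPoly r) _ _ _ _ _
    (homogeneousSubmodule (Fin r) ℂ) 1 i _ (MvPolynomial.gradedAlgebra) (X c) f (isHomogeneous_X ℂ c)
  rw [add_comm, ← decomposition.decompose'_apply, ← decomposition.decompose'_apply]
  exact h

theorem finrank_degQ_one {I : Ideal (MPoly r)} (hnd : Nondeg I) :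
    Module.finrank ℂ (degQ I 1) = r := by
  have hinj : Function.Injective
      ((Ideal.Quotient.mkₐ ℂ I).toLinearMap.domRestrict (homogeneousSubmodule (Fin r) ℂ 1)) := by
    rw [injective_iff_map_eq_zero]
    rintro ⟨f, hf⟩ h
    exact Subtype.ext (hnd f hf (Ideal.Quotient.eq_zero_iff_mem.1 h))
  have h1 : degQ I 1 = LinearMap.range
      ((Ideal.Quotient.mkₐ ℂ I).toLinearMap.domRestrict (homogeneousSubmodule (Fin r) ℂ 1)) := by
    rw [LinearMap.range_domRestrict]; rfl
  rw [h1, LinearMap.finrank_range_of_inj hinj, homogeneousSubmodule_one_eq_span_X,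
    finrank_span_eq_card (MvPolynomial.linearIndependent_X (Fin r) ℂ), Fintype.card_fin]

/-- Some `f₁ = g / x_c` with `g` a linear form generates each large power of `W` over the previous
one: take `g` regular on `R / (I, x_c)` in high degrees. -/
theorem exists_affW_parameter (hc : toFrac I (X c) ≠ 0) (hI : IsHomogIdeal I) {s p : ℤ} {N : ℕ}
    (hs0 : 0 < s) (hw : ∀ t : ℕ, N ≤ t → (Module.finrank ℂ ↥(affW I c ^ t) : ℤ) = s * t + 1 - p) :
    ∃ f1 ∈ affW I c, ∃ k0, ∀ j, k0 ≤ j → affW I c ^ (j + 1) ≤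
      affW I c ^ j ⊔ (affW I c ^ j).map (LinearMap.mulLeft ℂ f1) := by
  have := finite_affW (I := I) (c := c)
  obtain ⟨ℓ₁, ⟨g, hg, rfl⟩, N', hN'⟩ := exists_parameter
    (degQ I 1) (Ideal.Quotient.mk I (X c))
  have hpow : ∀ i, degQ I 1 ^ i = degQ I i := fun i => by
    rw [degQ, ← Submodule.map_pow, homogeneousSubmodule_one_pow]; rfl
  have hf1 : (toFrac I (X c))⁻¹ * toFrac I g ∈ affW I c := by
    rw [← pow_one (affW I c), mem_affW_pow]
    exact ⟨g, hg, by rw [pow_one]⟩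
  refine ⟨_, hf1, max N N' + 1, parameter_generates (one_mem_affW hc) hf1 hs0
    (fun t ht => hw t ((le_max_left _ _).trans ht)) ?_⟩
  intro i hi z hz hfz
  obtain ⟨a, ha, rfl⟩ := mem_affW_pow.1 hz
  obtain ⟨b, hb, hab⟩ := mem_affW_pow.1 hfz
  have hga : toFrac I (g * a) = toFrac I (X c * b) := by
    have hne := pow_ne_zero (i + 1) hc
    rw [map_mul, map_mul]
    field_simp at hab
    rw [← hab]; ring
  rw [toFrac_eq_iff] at hga
  have hmem := hN' (i + 1) (by omega) (Ideal.Quotient.mk I a) (by rw [hpow]; exact ⟨a, ha, rfl⟩) (by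
    change Ideal.Quotient.mk I g * _ ∈ _
    rw [← map_mul, hga, map_mul]
    exact Ideal.mul_mem_right _ _ (Ideal.mem_span_singleton_self _))
  obtain ⟨d, hd⟩ := Ideal.mem_span_singleton'.1 hmem
  obtain ⟨d, rfl⟩ := Ideal.Quotient.mk_surjective d
  rw [← map_mul, Ideal.Quotient.eq] at hd
  have hd' := hI _ hd (i + 1)
  rw [map_sub, mul_comm, homogeneousComponent_X_mul,
    homogeneousComponent_of_mem (n := i + 1) (m := i + 1) ha, if_pos rfl,
    ← Ideal.Quotient.eq, ← toFrac_eq_iff, map_mul] at hd'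
  refine mem_affW_pow.2 ⟨_, homogeneousComponent_mem i d, ?_⟩
  rw [← hd']
  field_simp
  ring

end Translation

/-! ### Sections as graded homomorphisms -/

section GlobalSections

open MvPolynomial

variable {r : ℕ} {I : Ideal (MPoly r)} [I.IsPrime] {c : Fin r}

theorem degQZ_natCast {I : Ideal (MPoly r)} (i : ℕ) : degQZ I (i : ℤ) = degQ I i := by
  simp [degQZ]

theorem homogeneousSubmodule_le_mId_pow {j k : ℕ} {a : MPoly r}
    (ha : a ∈ homogeneousSubmodule (Fin r) ℂ j) (hkj : k ≤ j) : a ∈ mId r ^ k :=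
  (mem_pow_idealOfVars_iff k a).2 fun x hx => by
    have h : Finsupp.degree x = j := by
      rw [Finsupp.degree_eq_weight_one]; exact ha (mem_support_iff.1 hx)
    omega

theorem eq_zero_of_mem_mId_pow {j k : ℕ} {a : MPoly r}
    (ha : a ∈ homogeneousSubmodule (Fin r) ℂ j) (hjk : j < k) (ham : a ∈ mId r ^ k) : a = 0 := by
  by_contra h0
  obtain ⟨x, hx⟩ := support_nonempty.2 h0
  have h : Finsupp.degree x = j := by
    rw [Finsupp.degree_eq_weight_one]; exact ha (mem_support_iff.1 hx)
  have := (mem_pow_idealOfVars_iff k a).1 ham x hx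
  omega

theorem mId_pow_eq_span (k : ℕ) :
    mId r ^ k = Ideal.span (homogeneousSubmodule (Fin r) ℂ k : Set (MPoly r)) := by
  refine le_antisymm ?_ (Ideal.span_le.2 fun a ha => homogeneousSubmodule_le_mId_pow ha le_rfl)
  rw [mId]
  change idealOfVars (Fin r) ℂ ^ k ≤ _
  rw [pow_idealOfVars_eq_span]
  refine Ideal.span_mono ?_
  rintro _ ⟨x, hx, rfl⟩
  exact isHomogeneous_monomial _ hx

/-- The rational function `φ(x_c ^ k) / x_c ^ (k + t)` attached to `φ ∈ Hom(m^k, R/I)_t`. -/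
noncomputable def homToFrac (I : Ideal (MPoly r)) [I.IsPrime] (c : Fin r) (k t : ℕ) :
    ((mId r ^ k : Ideal (MPoly r)) →ₗ[MPoly r] (MPoly r ⧸ I)) →ₗ[ℂ]
      FractionRing (MPoly r ⧸ I) where
  toFun φ := (toFrac I (X c) ^ (k + t))⁻¹ * algebraMap _ (FractionRing (MPoly r ⧸ I))
    (φ ⟨X c ^ k, homogeneousSubmodule_le_mId_pow (isHomogeneous_X_pow c k) le_rfl⟩)
  map_add' φ ψ := by simp [mul_add]
  map_smul' a φ := by
    exact (congrArg (_ * ·) (map_smul (IsScalarTower.toAlgHom ℂ (MPoly r ⧸ I)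
      (FractionRing (MPoly r ⧸ I))) a (φ _))).trans (mul_smul_comm _ _ _)

theorem homToFrac_mul (hc : toFrac I (X c) ≠ 0) {k t : ℕ}
    (φ : (mId r ^ k : Ideal (MPoly r)) →ₗ[MPoly r] (MPoly r ⧸ I)) (a : MPoly r)
    (ha : a ∈ mId r ^ k) :
    homToFrac I c k t φ * toFrac I a =
      (toFrac I (X c) ^ t)⁻¹ * algebraMap _ (FractionRing (MPoly r ⧸ I)) (φ ⟨a, ha⟩) := by
  have hk := homogeneousSubmodule_le_mId_pow (isHomogeneous_X_pow (R := ℂ) c k) le_rfl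
  have h1 : a • φ ⟨X c ^ k, hk⟩ = (X c ^ k : MPoly r) • φ ⟨a, ha⟩ := by
    rw [← map_smul, ← map_smul]
    congr 1
    exact Subtype.ext (mul_comm _ _)
  have h2 := congrArg (algebraMap _ (FractionRing (MPoly r ⧸ I))) h1
  have h3 : ∀ (f : MPoly r) (b : MPoly r ⧸ I), algebraMap _ (FractionRing (MPoly r ⧸ I)) (f • b) =
      toFrac I f * algebraMap _ (FractionRing (MPoly r ⧸ I)) b := fun f b => by
    exact map_mul (algebraMap _ (FractionRing (MPoly r ⧸ I))) (Ideal.Quotient.mk I f) b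
  rw [h3, h3, map_pow] at h2
  change (toFrac I (X c) ^ (k + t))⁻¹ * algebraMap _ (FractionRing (MPoly r ⧸ I)) _ * _ = _
  rw [pow_add]
  field_simp
  rw [mul_comm, h2]

/-- Deligne's description of sections: `Hom(m^k, R/I)_t` is the colon space
`W ^ (k + t) / W ^ k`. -/
theorem map_homToFrac (hc : toFrac I (X c) ≠ 0) (k t : ℕ) :
    (gradedHomSub I k t).map (homToFrac I c k t) = affW I c ^ (k + t) / affW I c ^ k := by
  ext f
  rw [Submodule.mem_div_iff_forall_mul_mem]
  constructor
  · rintro ⟨φ, hφ, rfl⟩ y hy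
    obtain ⟨a, ha, rfl⟩ := mem_affW_pow.1 hy
    have ham := homogeneousSubmodule_le_mId_pow ha le_rfl
    have h := hφ k a ham ha
    rw [← Nat.cast_add, degQZ_natCast] at h
    obtain ⟨b, hb, hb'⟩ := h
    refine mem_affW_pow.2 ⟨b, hb, ?_⟩
    rw [mul_left_comm, homToFrac_mul hc φ a ham, ← hb', pow_add, mul_inv, mul_assoc]
    rfl
  · intro hf
    have hkey : ∀ j, ∀ a ∈ homogeneousSubmodule (Fin r) ℂ (k + j),
        ∃ b ∈ homogeneousSubmodule (Fin r) ℂ (k + t + j),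
          toFrac I b = toFrac I a * (f * toFrac I (X c) ^ t) := by
      intro j a ha
      have hmem : (toFrac I (X c) ^ (k + j))⁻¹ * toFrac I a ∈ affW I c ^ (k + j) :=
        mem_affW_pow.2 ⟨a, ha, rfl⟩
      have hle : affW I c ^ (k + j) ≤
          (affW I c ^ (k + t + j)).comap (LinearMap.mulLeft ℂ f) := by
        rw [pow_add, Submodule.mul_le]
        intro x hx y hy
        rw [Submodule.mem_comap, LinearMap.mulLeft_apply, ← mul_assoc, pow_add _ (k + t)]
        exact Submodule.mul_mem_mul (hf x hx) hy
      obtain ⟨b, hb, hb'⟩ := mem_affW_pow.1 (hle hmem)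
      refine ⟨b, hb, ?_⟩
      rw [LinearMap.mulLeft_apply] at hb'
      have e : toFrac I b = toFrac I (X c) ^ (k + t + j) *
          ((toFrac I (X c) ^ (k + t + j))⁻¹ * toFrac I b) := by field_simp
      rw [e, hb']
      field_simp
      ring
    let ι : (MPoly r ⧸ I) →ₗ[MPoly r] FractionRing (MPoly r ⧸ I) :=
      (IsScalarTower.toAlgHom (MPoly r) (MPoly r ⧸ I) (FractionRing (MPoly r ⧸ I))).toLinearMap
    have hι : Function.Injective ι :=
      IsFractionRing.injective (MPoly r ⧸ I) (FractionRing (MPoly r ⧸ I))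
    let μ : MPoly r →ₗ[MPoly r] FractionRing (MPoly r ⧸ I) :=
      LinearMap.toSpanSingleton (MPoly r) _ (f * toFrac I (X c) ^ t)
    have hμ : ∀ a, μ a = toFrac I a * (f * toFrac I (X c) ^ t) := fun a => by
      rw [LinearMap.toSpanSingleton_apply, Algebra.smul_def]; rfl
    have hrange : ∀ a : (mId r ^ k : Ideal (MPoly r)), μ a ∈ LinearMap.range ι := by
      have hle : mId r ^ k ≤ (LinearMap.range ι).comap μ := by
        rw [mId_pow_eq_span]
        refine Ideal.span_le.2 fun a ha => ?_
        obtain ⟨b, -, hb⟩ := hkey 0 a ha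
        exact ⟨Ideal.Quotient.mk I b, by rw [hμ, ← hb]; rfl⟩
      exact fun a => hle a.2
    let φ : (mId r ^ k : Ideal (MPoly r)) →ₗ[MPoly r] (MPoly r ⧸ I) :=
      (LinearEquiv.ofInjective ι hι).symm.toLinearMap.comp
        ((μ.domRestrict (mId r ^ k)).codRestrict (LinearMap.range ι) hrange)
    have hφ : ∀ a, ι (φ a) = μ a := fun a =>
      congrArg Subtype.val ((LinearEquiv.ofInjective ι hι).apply_symm_apply
        ⟨μ a, hrange a⟩)
    refine ⟨φ, ?_, ?_⟩
    · intro j a ha haj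
      rcases lt_or_ge j k with hjk | hjk
      · have h0 : (⟨a, ha⟩ : (mId r ^ k : Ideal (MPoly r))) = 0 :=
          Subtype.ext (eq_zero_of_mem_mId_pow haj hjk ha)
        rw [h0, map_zero]
        exact Submodule.zero_mem _
      · obtain ⟨j, rfl⟩ := Nat.exists_eq_add_of_le hjk
        obtain ⟨b, hb, hb'⟩ := hkey j a haj
        rw [← Nat.cast_add, degQZ_natCast, add_right_comm]
        refine ⟨b, hb, hι ?_⟩
        rw [hφ, hμ, ← hb']
        rfl
    · change (toFrac I (X c) ^ (k + t))⁻¹ * ι (φ _) = f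
      rw [hφ, hμ, map_pow, pow_add]
      field_simp

theorem homToFrac_injective (hc : toFrac I (X c) ≠ 0) (k t : ℕ) :
    Function.Injective (homToFrac I c k t) := by
  rw [injective_iff_map_eq_zero]
  intro φ h0
  ext ⟨a, ha⟩
  have h := homToFrac_mul (t := t) hc φ a ha
  rw [h0, zero_mul, eq_comm, mul_eq_zero] at h
  refine IsFractionRing.injective (MPoly r ⧸ I) (FractionRing (MPoly r ⧸ I)) ?_
  rw [h.resolve_left (inv_ne_zero (pow_ne_zero t hc)), LinearMap.zero_apply, map_zero]

/-- The twisted sections of the structure sheaf form the saturation of `⨁ Wⁱ`: finite generation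
makes the increasing union `⋃ₖ W ^ (k + t) / W ^ k` stationary. -/
theorem h0Nat_eq (hc : toFrac I (X c) ≠ 0) (t : ℕ) (hfg : (satB (affW I c) t).FG) :
    h0Nat I t = Module.finrank ℂ (satB (affW I c) t) := by
  have hfin : FiniteDimensional ℂ (satB (affW I c) t) := Module.Finite.iff_fg.2 hfg
  have hk : ∀ k, Module.finrank ℂ (gradedHomSub I k t) =
      Module.finrank ℂ ↥(affW I c ^ (k + t) / affW I c ^ k) := fun k => by
    rw [← map_homToFrac hc k t]
    exact (Submodule.equivMapOfInjective _ (homToFrac_injective hc k t) _).finrank_eq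
  have hle : ∀ k, affW I c ^ (k + t) / affW I c ^ k ≤ satB (affW I c) t := fun k =>
    le_iSup (fun j => affW I c ^ (j + t) / affW I c ^ j) k
  have hub : ∀ k, Module.finrank ℂ (gradedHomSub I k t) ≤
      Module.finrank ℂ (satB (affW I c) t) := fun k => by
    rw [hk]; exact Submodule.finrank_mono (hle k)
  refine le_antisymm (ciSup_le hub) ?_
  have hcompact : IsCompactElement (satB (affW I c) t) :=
    (Submodule.fg_iff_compact _).1 hfg
  obtain ⟨k, hk'⟩ : ∃ k, satB (affW I c) t ≤ affW I c ^ (k + t) / affW I c ^ k := by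
    obtain ⟨_, ⟨k, rfl⟩, hk'⟩ := hcompact
      (Set.range fun j => affW I c ^ (j + t) / affW I c ^ j) _ (Set.range_nonempty _)
      (satB_step_mono (affW I c) t).directed_le.directedOn_range isLUB_iSup le_rfl
    exact ⟨k, hk'⟩
  calc _ ≤ Module.finrank ℂ (gradedHomSub I k t) := by
        rw [hk, le_antisymm hk' (hle k)]
    _ ≤ _ := le_ciSup (f := fun k => Module.finrank ℂ (gradedHomSub I k t))
        ⟨_, Set.forall_mem_range.2 hub⟩ k

end GlobalSections

/-! ### The estimates for the curve -/

set_option maxHeartbeats 2000000 in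
/-- The Hilbert function `w` of the curve and the dimensions `b` of its spaces of twisted sections,
with the estimates for the saturation of `W` transported to them. -/
theorem curve_estimates {r : ℕ} {s p : ℤ} (hs1 : (r : ℤ) - 1 ≤ s) (hs2 : s ≤ 2 * (r : ℤ) - 4)
    {I : Ideal (MPoly r)} [I.IsPrime] (hI : IsHomogIdeal I) (hnd : Nondeg I)
    (hinv : CurveInv I s p) :
    hilbNat I (1 : ℕ) = r ∧ (∀ t : ℕ, hilbNat I t ≤ h0Nat I t) ∧
    (∀ t : ℕ, 1 ≤ t → (h0Nat I t : ℤ) = s * t + 1 - p) ∧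
    ∀ t : ℕ, 1 ≤ t → (h0Nat I (t + 1 : ℕ) : ℤ) - hilbNat I (t + 1 : ℕ) ≤
      max 0 ((h0Nat I t : ℤ) - hilbNat I t - 1) := by
  obtain ⟨N, hN⟩ := hinv
  obtain ⟨c, hc⟩ : ∃ c : Fin r, toFrac I (MvPolynomial.X c) ≠ 0 := by
    refine ⟨⟨0, by omega⟩, fun h => ?_⟩
    rw [← map_zero (toFrac I), toFrac_eq_iff, map_zero, Ideal.Quotient.eq_zero_iff_mem] at h
    exact MvPolynomial.X_ne_zero _ (hnd _ (MvPolynomial.isHomogeneous_X ℂ _) h)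
  have := finite_affW (I := I) (c := c)
  have hhilb : ∀ t : ℕ, Module.finrank ℂ ↥(affW I c ^ t) = hilbNat I t := fun t => by
    rw [hilbNat, degQZ_natCast, finrank_affW_pow hc]
  have hw : ∀ t : ℕ, N.toNat ≤ t →
      (Module.finrank ℂ ↥(affW I c ^ t) : ℤ) = s * t + 1 - p := by
    intro t ht
    rw [hhilb, ← hN t (by omega)]
    rfl
  have hw1 : Module.finrank ℂ ↥(affW I c ^ 1) = r := by
    rw [finrank_affW_pow hc, finrank_degQ_one hnd]
  obtain ⟨f1, hf1, k0, hsop⟩ := exists_affW_parameter hc hI (by omega : 0 < s) hw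
  obtain ⟨hfg, hb, hstep⟩ := satB_estimates' (one_mem_affW hc) hf1 hsop (by omega) hw
    (by rw [← pow_one (affW I c), hw1]; exact hs2)
  have hh0 : ∀ t : ℕ, Module.finrank ℂ (satB (affW I c) t) = h0Nat I t := fun t =>
    (h0Nat_eq hc t (hfg t)).symm
  have hle : ∀ t : ℕ, hilbNat I t ≤ h0Nat I t := fun t => by
    have : FiniteDimensional ℂ (satB (affW I c) t) := Module.Finite.iff_fg.2 (hfg t)
    rw [← hh0, ← hhilb]
    exact Submodule.finrank_mono (pow_le_satB (affW I c) t)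
  simp only [hh0, hhilb] at hb hstep hw1
  exact ⟨hw1, hle, hb, hstep⟩

/-- Proposition 3.1.  Let `Σ ⊆ ℙ^{r-1}` be a nondegenerate integral curve of
degree `s` with arithmetic genus `π`, where `r-1 ≤ s ≤ 2r-4`.  Then `π ≤ π₀ = s-r+1`, and:
(i) `h¹(Σ, O_Σ(i)) = 0` for `i ≥ 1` (i.e. `h⁰(Σ, O_Σ(i))` equals `si+1-π`);
(ii) `h¹(ℙ^{r-1}, I_Σ(1)) = π₀ - π`;
(iii) `h¹(ℙ^{r-1}, I_Σ(i)) ≤ max(0, h¹(ℙ^{r-1}, I_Σ(i-1)) - 1)` for `i ≥ 2`; and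
(iv) `h¹(ℙ^{r-1}, I_Σ(i)) ≤ max(0, π₀-π+1-i)` for `i ≥ 1`. -/
theorem statement_7 (r : ℕ) (s π : ℤ)
    (hs1 : (r : ℤ) - 1 ≤ s) (hs2 : s ≤ 2 * (r : ℤ) - 4)
    (ISig : Ideal (MPoly r))
    (hcurve : IsCurve ISig) (hnd : Nondeg ISig) (hinv : CurveInv ISig s π) :
    π ≤ s - (r : ℤ) + 1 ∧
    (∀ i : ℤ, 1 ≤ i → (h0Nat ISig i : ℤ) = s * i + 1 - π) ∧
    (h1INat ISig 1 : ℤ) = (s - (r : ℤ) + 1) - π ∧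
    (∀ i : ℤ, 2 ≤ i → (h1INat ISig i : ℤ) ≤ max 0 ((h1INat ISig (i - 1) : ℤ) - 1)) ∧
    (∀ i : ℤ, 1 ≤ i → (h1INat ISig i : ℤ) ≤ max 0 ((s - (r : ℤ) + 1) - π + 1 - i)) := by
  obtain ⟨hI, hprime, -⟩ := hcurve
  obtain ⟨hw1, hle, hb, hstep⟩ := curve_estimates hs1 hs2 hI hnd hinv
  have hh1 : ∀ t : ℕ, (h1INat ISig t : ℤ) = (h0Nat ISig t : ℤ) - hilbNat ISig t := fun t => by
    rw [h1INat, Nat.cast_sub (hle t)]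
  have h11 : (h1INat ISig 1 : ℤ) = (s - (r : ℤ) + 1) - π := by
    have h := hh1 1
    rw [hb 1 le_rfl, hw1] at h
    push_cast at h
    linarith
  have hiii : ∀ i : ℤ, 2 ≤ i →
      (h1INat ISig i : ℤ) ≤ max 0 ((h1INat ISig (i - 1) : ℤ) - 1) := by
    intro i hi
    obtain ⟨n, rfl⟩ : ∃ n : ℕ, i = ((n + 1 : ℕ) : ℤ) := ⟨(i - 1).toNat, by omega⟩
    have hn : (((n + 1 : ℕ) : ℤ) - 1) = (n : ℤ) := by push_cast; ring
    rw [hn, hh1, hh1]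
    exact hstep n (by omega)
  refine ⟨?_, ?_, h11, hiii, ?_⟩
  · have : (0 : ℤ) ≤ h1INat ISig 1 := Int.natCast_nonneg _
    linarith
  · intro i hi
    obtain ⟨n, rfl⟩ : ∃ n : ℕ, i = (n : ℤ) := ⟨i.toNat, by omega⟩
    exact hb n (by omega)
  · intro i hi
    induction i, hi using Int.leInduction with
    | base =>
      rw [h11]
      exact le_max_of_le_right (by linarith)
    | succ i hi ih =>
      have h := hiii (i + 1) (by omega)
      rw [add_sub_cancel_right] at h
      omega
end

section
/- Let r, d, s, π be integers with r ≥ 4, r−1 ≤ s ≤ 2r−4, 0 ≤ π ≤ π₀ := s−r+1, and assume m ≥ π₀ − π (where d−1 = ms+ε, 0 ≤ ε ≤ s−1). Then ∑_{i=1}^{∞} (d − h_{r,d,s,π}(i)) = G*(r,d,s,π, −binom(π₀−π+1, 2)) (the sum is finite since h_{r,d,s,π}(i) = d for i ≥ m+2). -/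
/-!
Write `k = π₀ - π` with `π₀ = s - r + 1`. For `1 ≤ i ≤ m` the summand is
`(d - 1 + π) - i s + max 0 (k - i + 1)`, for `i = m + 1` it is the last term of `G*`, and it
vanishes afterwards. Since `0 ≤ k ≤ m`, the corrections `max 0 (k - i + 1)` add up to
`k + (k - 1) + ⋯ + 1 = binom(k + 1, 2)`, and the rest is an arithmetic progression
(`two_mul_sum_linear_add_max`); substituting `d - 1 = m s + ε` gives
`binom(m, 2) s + m (ε + π)`.
-/

open scoped BigOperators

theorem sum_Icc_one_succ (f : ℤ → ℤ) (n : ℕ) :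
    ∑ i ∈ Finset.Icc (1 : ℤ) ((n : ℤ) + 1), f i
      = ∑ i ∈ Finset.Icc (1 : ℤ) (n : ℤ), f i + f ((n : ℤ) + 1) := by
  have h : Finset.Icc (1 : ℤ) ((n : ℤ) + 1)
      = insert ((n : ℤ) + 1) (Finset.Icc (1 : ℤ) (n : ℤ)) := by
    ext x
    simp only [Finset.mem_Icc, Finset.mem_insert]
    omega
  rw [h, Finset.sum_insert (by simp), add_comm]

/-- Twice the sum of the first `n` terms. The correction `max 0 (k - i + 1)` contributes the
descending terms `k, k - 1, …`, which are exhausted once `i` exceeds `k`. -/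
theorem two_mul_sum_linear_add_max (A s k : ℤ) (hk : 0 ≤ k) (n : ℕ) :
    2 * ∑ i ∈ Finset.Icc (1 : ℤ) (n : ℤ), (A - i * s + max 0 (k - i + 1))
      = 2 * n * A - s * (n * (n + 1))
        + (if (n : ℤ) ≤ k then n * (2 * k + 1 - n) else k * (k + 1)) := by
  induction n with
  | zero => simp [hk]
  | succ n ih =>
    push_cast
    rw [sum_Icc_one_succ, mul_add, ih]
    rcases lt_trichotomy (n : ℤ) k with h | h | h
    · rw [if_pos h.le, if_pos (by omega), max_eq_right (by omega)]
      ring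
    · rw [if_pos h.le, if_neg (by omega), max_eq_left (by omega), h]
      ring
    · rw [if_neg (by omega), if_neg (by omega), max_eq_left (by omega)]
      ring

theorem two_mul_binom2 (z : ℤ) : 2 * binom2 z = z * (z - 1) :=
  Int.mul_ediv_cancel' (by
    rcases Int.even_or_odd' z with ⟨c, rfl | rfl⟩
    · exact ⟨c * (2 * c - 1), by ring⟩
    · exact ⟨(2 * c + 1) * c, by ring⟩)

/-- Lemma 3.2(1).  `∑_{i≥1} (d - h_{r,d,s,π}(i)) = G*(r,d,s,π,
-binom(π₀-π+1,2))` (the sum is finite since `h_{r,d,s,π}(i) = d` for `i ≥ m+2`). -/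
theorem statement_8 (r d s π : ℤ) (hr : 4 ≤ r)
    (hs1 : r - 1 ≤ s) (hs2 : s ≤ 2 * r - 4)
    (hπ1 : 0 ≤ π) (hπ2 : π ≤ s - r + 1)
    (hm : s - r + 1 - π ≤ (d - 1) / s) :
    ∑ᶠ i ∈ Set.Ici (1 : ℤ), (d - hF r d s π i)
      = Gstar r d s π (-(binom2 (s - r + 1 - π + 1))) := by
  set m := (d - 1) / s with hmdef
  set ε := (d - 1) % s with hεdef
  have hdiv : s * m + ε = d - 1 := Int.mul_ediv_add_emod (d - 1) s
  have hm0 : 0 ≤ m := by omega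
  -- The summand vanishes from degree `m + 2` on, so the sum is over `1, …, m + 1`.
  have hfin : ∑ᶠ i ∈ Set.Ici (1 : ℤ), (d - hF r d s π i)
      = ∑ i ∈ Finset.Icc (1 : ℤ) (m + 1), (d - hF r d s π i) := by
    apply finsum_mem_eq_sum_of_inter_support_eq
    ext i
    simp only [Set.mem_inter_iff, Set.mem_Ici, Function.mem_support, Finset.coe_Icc, Set.mem_Icc]
    constructor
    · rintro ⟨h1, h2⟩
      refine ⟨⟨h1, ?_⟩, h2⟩
      by_contra h3
      apply h2
      unfold hF
      rw [← hmdef, if_neg (by omega), if_neg (by omega), if_pos (by omega), sub_self]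
    · rintro ⟨⟨h1, -⟩, h2⟩
      exact ⟨h1, h2⟩
  have hlast : d - hF r d s π (m + 1) = max 0 ((2 * π - (s - 1 - ε)) / 2) := by
    unfold hF
    rw [← hmdef, ← hεdef, if_neg (by omega), if_pos rfl]
    ring
  have hmain : ∑ i ∈ Finset.Icc (1 : ℤ) m, (d - hF r d s π i)
      = ∑ i ∈ Finset.Icc (1 : ℤ) m,
          ((d - 1 + π) - i * s + max 0 ((s - r + 1 - π) - i + 1)) := by
    refine Finset.sum_congr rfl fun i hi => ?_
    rw [Finset.mem_Icc] at hi
    unfold hF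
    rw [← hmdef, if_pos hi]
    ring
  have hclosed := two_mul_sum_linear_add_max (d - 1 + π) s (s - r + 1 - π) (by omega) m.toNat
  have hsplit := sum_Icc_one_succ (fun i => d - hF r d s π i) m.toNat
  rw [Int.toNat_of_nonneg hm0] at hclosed hsplit
  -- With `k = s - r + 1 - π`, the boundary case `m = k` also gives `k (k + 1)`.
  have hite : (if m ≤ s - r + 1 - π then m * (2 * (s - r + 1 - π) + 1 - m)
      else (s - r + 1 - π) * (s - r + 1 - π + 1))
      = (s - r + 1 - π) * (s - r + 1 - π + 1) := by
    split_ifs with h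
    · rw [le_antisymm h hm]
      ring
    · rfl
  rw [hite] at hclosed
  rw [hfin, hsplit, hmain, hlast]
  unfold Gstar
  rw [← hmdef, ← hεdef]
  have hb1 := two_mul_binom2 m
  have hb2 := two_mul_binom2 (s - r + 1 - π + 1)
  -- Doubling clears the denominators of the binomial coefficients.
  apply mul_left_cancel₀ (two_ne_zero (α := ℤ))
  linear_combination hclosed - s * hb1 - hb2 - 2 * m * hdiv
end
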